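/- arXiv:2004.09326 — 2 statements merged into one kernel-verified Lean document; each statement's English description precedes it below -/
import Mathlib

section
/- Let G = H ∗ K be the free product of two groups H and K, with the canonical embeddings of H and of K into G. Then every generating n-tuple (g₁,…,gₙ) of G is Nielsen equivalent to a tuple of the form (h₁,…,h_s, k_{s+1},…,kₙ) for some 0 ≤ s ≤ n, where each of h₁,…,h_s lies in the image of H and each of k_{s+1},…,kₙ lies in the image of K. -/
/-- An elementary Nielsen transformation on an `n`-tuple of elements of a group:
(T1) invert an entry, (T2) swap two distinct entries, (T3) replace an entry by its
product with another (distinct) entry. -/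
inductive NielsenStep {G : Type*} [Group G] {n : ℕ} : (Fin n → G) → (Fin n → G) → Prop
  | inv (T : Fin n → G) (i : Fin n) : NielsenStep T (Function.update T i (T i)⁻¹)
  | swap (T : Fin n → G) (i j : Fin n) (hij : i ≠ j) : NielsenStep T (T ∘ Equiv.swap i j)
  | mul (T : Fin n → G) (i j : Fin n) (hij : i ≠ j) :
      NielsenStep T (Function.update T i (T i * T j))

/-- Two `n`-tuples of elements of a group are Nielsen equivalent if a finite chain of
elementary Nielsen transformations carries one to the other. -/
def NielsenEquiv {G : Type*} [Group G] {n : ℕ} (T T' : Fin n → G) : Prop :=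
  Relation.ReflTransGen NielsenStep T T'


section GrushkoNielsen
variable {G : Type*} [Group G] {n : ℕ}

theorem NE_trans {T T' T'' : Fin n → G} (h : NielsenEquiv T T') (h' : NielsenEquiv T' T'') :
    NielsenEquiv T T'' := Relation.ReflTransGen.trans h h'

theorem NE_inv (T : Fin n → G) (i : Fin n) :
    NielsenEquiv T (Function.update T i (T i)⁻¹) :=
  Relation.ReflTransGen.single (NielsenStep.inv T i)

theorem NE_mul (T : Fin n → G) (i j : Fin n) (hij : i ≠ j) :
    NielsenEquiv T (Function.update T i (T i * T j)) :=
  Relation.ReflTransGen.single (NielsenStep.mul T i j hij)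

theorem NE_mul_inv (T : Fin n → G) (i j : Fin n) (hij : i ≠ j) :
    NielsenEquiv T (Function.update T i (T i * (T j)⁻¹)) := by
  refine NE_trans (NE_inv T j) (NE_trans (NE_mul _ i j hij) ?_)
  convert NE_inv _ j using 1
  ext k
  by_cases hk : k = i
  · subst hk; simp [hij]
  · by_cases hk' : k = j
    · subst hk'; simp [hk]
    · simp [hk, hk']

theorem NE_right (T : Fin n → G) (I : Set (Fin n)) (i : Fin n) (hi : i ∉ I) (w : G)
    (hw : w ∈ Subgroup.closure (T '' I)) : NielsenEquiv T (Function.update T i (T i * w)) := by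
  induction hw using Subgroup.closure_induction_right with
  | one => simp only [mul_one, Function.update_eq_self]; exact Relation.ReflTransGen.refl
  | mul_right x y hx hy ih =>
    obtain ⟨j, hj, rfl⟩ := hy
    have hij : i ≠ j := fun h => hi (h ▸ hj)
    refine NE_trans ih ?_
    convert NE_mul _ i j hij using 1
    simp [hij.symm, mul_assoc]
  | mul_inv_cancel x y hx hy ih =>
    obtain ⟨j, hj, rfl⟩ := hy
    have hij : i ≠ j := fun h => hi (h ▸ hj)
    refine NE_trans ih ?_
    convert NE_mul_inv _ i j hij using 1
    simp [hij.symm, mul_assoc]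

theorem NE_left (T : Fin n → G) (I : Set (Fin n)) (i : Fin n) (hi : i ∉ I) (w : G)
    (hw : w ∈ Subgroup.closure (T '' I)) : NielsenEquiv T (Function.update T i (w * T i)) := by
  refine NE_trans (NE_inv T i) (NE_trans (NE_right _ I i hi w⁻¹ ?_) ?_)
  · rw [Set.image_congr (g := T)]
    · exact inv_mem hw
    · intro a ha
      exact Function.update_of_ne (fun h : a = i => hi (h ▸ ha)) _ _
  · convert NE_inv _ i using 1
    simp

theorem NE_both (T : Fin n → G) (I : Set (Fin n)) (i : Fin n) (hi : i ∉ I) (c d : G)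
    (hc : c ∈ Subgroup.closure (T '' I)) (hd : d ∈ Subgroup.closure (T '' I)) :
    NielsenEquiv T (Function.update T i (c * T i * d)) := by
  refine NE_trans (NE_left T I i hi c hc) ?_
  convert NE_right _ I i hi d ?_ using 1
  · simp
  · rw [Set.image_congr (g := T)]
    · exact hd
    · intro a ha
      exact Function.update_of_ne (fun h : a = i => hi (h ▸ ha)) _ _

theorem NE_all (T T' : Fin n → G) (I : Set (Fin n)) (h1 : ∀ i ∈ I, T' i = T i)
    (h2 : ∀ i ∉ I, ∃ c ∈ Subgroup.closure (T '' I), ∃ d ∈ Subgroup.closure (T '' I),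
      T' i = c * T i * d) : NielsenEquiv T T' := by
  classical
  have key : ∀ J : Finset (Fin n), NielsenEquiv T (fun i => if i ∈ J then T' i else T i) := by
    intro J
    induction J using Finset.induction_on with
    | empty => exact Relation.ReflTransGen.refl
    | insert j J hj ih =>
      by_cases hjI : j ∈ I
      · convert ih using 2 with k
        by_cases hk : k = j
        · subst hk; simp [h1 k hjI, hj]
        · simp [hk]
      · obtain ⟨c, hc, d, hd, he⟩ := h2 j hjI
        refine NE_trans ih ?_
        have him : (fun i => if i ∈ J then T' i else T i) '' I = T '' I := by
          apply Set.image_congr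
          intro a ha
          by_cases haJ : a ∈ J
          · simp [haJ, h1 a ha]
          · simp [haJ]
        convert NE_both _ I j hjI c d (by rw [him]; exact hc) (by rw [him]; exact hd) using 1
        ext k
        by_cases hk : k = j
        · subst hk; simp [hj, he]
        · simp [hk]
  simpa using key Finset.univ

theorem NE_map {G' : Type*} [Group G'] (f : G →* G') {T T' : Fin n → G} (h : NielsenEquiv T T') :
    NielsenEquiv (f ∘ T) (f ∘ T') := by
  induction h with
  | refl => exact Relation.ReflTransGen.refl
  | tail h1 h2 ih =>
    refine NE_trans ih ?_
    cases h2 with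
    | inv i =>
      convert NE_inv _ i using 1
      rw [Function.comp_update]; simp
    | swap i j hij =>
      exact Relation.ReflTransGen.single (NielsenStep.swap _ i j hij)
    | mul i j hij =>
      convert NE_mul _ i j hij using 1
      rw [Function.comp_update]; simp

theorem NE_closure {T T' : Fin n → G} (h : NielsenEquiv T T') :
    Subgroup.closure (Set.range T) ≤ Subgroup.closure (Set.range T') := by
  induction h with
  | refl => exact le_rfl
  | @tail T₁ T₂ h1 h2 ih =>
    refine ih.trans ?_
    rw [Subgroup.closure_le]
    rintro _ ⟨k, rfl⟩
    cases h2 with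
    | inv i =>
      by_cases hk : k = i
      · subst hk
        have : Function.update T₁ k (T₁ k)⁻¹ k ∈
            Subgroup.closure (Set.range (Function.update T₁ k (T₁ k)⁻¹)) :=
          Subgroup.subset_closure ⟨k, rfl⟩
        simpa using this
      · exact Subgroup.subset_closure ⟨k, by simp [hk]⟩
    | swap i j hij => exact Subgroup.subset_closure ⟨Equiv.swap i j k, by simp⟩
    | mul i j hij =>
      by_cases hk : k = i
      · subst hk
        have h1 : Function.update T₁ k (T₁ k * T₁ j) k ∈
            Subgroup.closure (Set.range (Function.update T₁ k (T₁ k * T₁ j))) :=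
          Subgroup.subset_closure ⟨k, rfl⟩
        have h2 : Function.update T₁ k (T₁ k * T₁ j) j ∈
            Subgroup.closure (Set.range (Function.update T₁ k (T₁ k * T₁ j))) :=
          Subgroup.subset_closure ⟨j, rfl⟩
        rw [Function.update_self] at h1
        rw [Function.update_of_ne hij.symm] at h2
        simpa using mul_mem h1 (inv_mem h2)
      · exact Subgroup.subset_closure ⟨k, by simp [hk]⟩

theorem NE_conj (T : Fin n → G) (g : G) (hg : g ∈ Subgroup.closure (Set.range T)) :
    NielsenEquiv T (fun i => g * T i * g⁻¹) := by
  have gen : ∀ (j : Fin n) (e : G), (e = T j ∨ e = (T j)⁻¹) →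
      NielsenEquiv T (fun i => e * T i * e⁻¹) := by
    intro j e he
    have hm : e ∈ Subgroup.closure (T '' {j}) := by
      have : T j ∈ Subgroup.closure (T '' {j}) := Subgroup.subset_closure ⟨j, rfl, rfl⟩
      rcases he with rfl | rfl
      · exact this
      · exact inv_mem this
    refine NE_all T _ {j} ?_ ?_
    · rintro i rfl
      rcases he with rfl | rfl <;> simp
    · intro i _
      exact ⟨e, hm, e⁻¹, inv_mem hm, rfl⟩
  have step : ∀ (e g : G), NielsenEquiv T (fun i => e * T i * e⁻¹) →
      NielsenEquiv T (fun i => g * T i * g⁻¹) →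
      NielsenEquiv T (fun i => (e * g) * T i * (e * g)⁻¹) := by
    intro e g h1 h2
    refine NE_trans h1 ?_
    have h3 := NE_map (MulAut.conj e).toMonoidHom h2
    have e1 : ⇑(MulAut.conj e).toMonoidHom ∘ T = fun i => e * T i * e⁻¹ := by
      ext i; simp
    have e2 : ⇑(MulAut.conj e).toMonoidHom ∘ (fun i => g * T i * g⁻¹) =
        fun i => (e * g) * T i * (e * g)⁻¹ := by
      ext i; simp [mul_assoc]
    rwa [e1, e2] at h3
  induction hg using Subgroup.closure_induction_left with
  | one => simp only [one_mul, inv_one, mul_one]; exact Relation.ReflTransGen.refl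
  | mul_left x hx y hy ih =>
    obtain ⟨j, rfl⟩ := hx
    exact step _ _ (gen j _ (Or.inl rfl)) ih
  | inv_mul_cancel x hx y hy ih =>
    obtain ⟨j, rfl⟩ := hx
    exact step _ _ (gen j _ (Or.inr rfl)) ih

theorem NE_perm (T : Fin n → G) (σ : Equiv.Perm (Fin n)) : NielsenEquiv T (T ∘ σ) := by
  induction σ using Equiv.Perm.swap_induction_on' with
  | one => exact Relation.ReflTransGen.refl
  | mul_swap f x y hxy ih =>
    exact NE_trans ih (Relation.ReflTransGen.single (NielsenStep.swap _ x y hxy))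

end GrushkoNielsen

section GrushkoGraph
variable {G : Type*} [Group G] {n : ℕ}

/-- adjacency inside `S`: two elements of `S` in a common coset of `A b`. -/
def GAdj (A : Bool → Subgroup G) (S : Set G) (x y : G) : Prop :=
  x ∈ S ∧ y ∈ S ∧ ∃ b, x⁻¹ * y ∈ A b

def GPath (A : Bool → Subgroup G) (S : Set G) (x y : G) : Prop :=
  Relation.ReflTransGen (GAdj A S) x y

def GConn (A : Bool → Subgroup G) (S : Set G) : Prop :=
  ∀ x ∈ S, ∀ y ∈ S, GPath A S x y

def GWit (A : Bool → Subgroup G) (S : Set G) (t : G) : Prop :=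
  ∃ p ∈ S, ∃ q ∈ S, ∃ b, p⁻¹ * t * q ∈ A b

theorem inv_mul_mem_comm {B : Subgroup G} {x y : G} (h : x⁻¹ * y ∈ B) : y⁻¹ * x ∈ B := by
  simpa using inv_mem h

theorem inv_mul_mem_trans {B : Subgroup G} {x y z : G} (h : x⁻¹ * y ∈ B) (h' : y⁻¹ * z ∈ B) :
    x⁻¹ * z ∈ B := by
  have := mul_mem h h'
  simpa [mul_assoc] using this

theorem GAdj_symm {A : Bool → Subgroup G} {S : Set G} {x y : G} (h : GAdj A S x y) :
    GAdj A S y x := by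
  obtain ⟨hx, hy, b, hb⟩ := h
  exact ⟨hy, hx, b, inv_mul_mem_comm hb⟩

theorem GPath_lift {A : Bool → Subgroup G} {S S' : Set G} (f : G → G)
    (hf : ∀ x y, GAdj A S x y → GAdj A S' (f x) (f y)) {x y : G} (h : GPath A S x y) :
    GPath A S' (f x) (f y) := by
  induction h with
  | refl => exact Relation.ReflTransGen.refl
  | tail _ h2 ih => exact Relation.ReflTransGen.tail ih (hf _ _ h2)

theorem GPath_symm {A : Bool → Subgroup G} {S : Set G} {x y : G} (h : GPath A S x y) :
    GPath A S y x := by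
  induction h with
  | refl => exact Relation.ReflTransGen.refl
  | tail _ h2 ih => exact Relation.ReflTransGen.head (GAdj_symm h2) ih

theorem GPath_mono {A : Bool → Subgroup G} {S S' : Set G} (hS : S ⊆ S') {x y : G}
    (h : GPath A S x y) : GPath A S' x y :=
  GPath_lift id (fun _ _ h => ⟨hS h.1, hS h.2.1, h.2.2⟩) h

theorem GPath_smul {A : Bool → Subgroup G} {S S' : Set G} (g : G) (hS : ∀ x ∈ S, g * x ∈ S')
    {x y : G} (h : GPath A S x y) : GPath A S' (g * x) (g * y) := by
  refine GPath_lift (fun x => g * x) ?_ h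
  rintro a b ⟨ha, hb, c, hc⟩
  exact ⟨hS _ ha, hS _ hb, c, by simpa [mul_assoc] using hc⟩

/-- A path in `S` from `z ≠ x` to `x` passes, before reaching `x`, a neighbour of `x`. -/
theorem GPath_first {A : Bool → Subgroup G} {S : Set G} {z x : G} (h : GPath A S z x)
    (hz : z ≠ x) : ∃ z', z' ∈ S \ {x} ∧ (∃ b, x⁻¹ * z' ∈ A b) ∧ GPath A (S \ {x}) z z' := by
  induction h using Relation.ReflTransGen.head_induction_on with
  | refl => exact absurd rfl hz
  | @head a c hac hcx ih =>
    by_cases hc : c = x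
    · subst hc
      obtain ⟨ha, hc, b, hb⟩ := hac
      exact ⟨a, ⟨ha, hz⟩, ⟨b, inv_mul_mem_comm hb⟩, Relation.ReflTransGen.refl⟩
    · obtain ⟨z', h1, h2, h3⟩ := ih hc
      exact ⟨z', h1, h2, Relation.ReflTransGen.head ⟨⟨hac.1, hz⟩, ⟨hac.2.1, hc⟩, hac.2.2⟩ h3⟩

theorem grushko_reduce (A : Bool → Subgroup G) (S : Finset G) (hS : GConn A (S : Set G))
    (T : Fin n → G) (x y u : G) (hx : x ∈ S) (hy : y ∈ S) (hxy : x ≠ y) (I : Set (Fin n))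
    (hu : u ∈ Subgroup.closure (T '' I)) (hxu : x = u * y)
    (hI : ∀ i ∈ I, (∃ b, y⁻¹ * T i * y ∈ A b) ∨ T i * y = x ∨ T i * x = y)
    (hW : ∀ i, GWit A (S : Set G) (T i)) :
    ∃ S' : Finset G, S'.card < S.card ∧ S'.Nonempty ∧ GConn A (S' : Set G) ∧
      ∃ T' : Fin n → G, NielsenEquiv T T' ∧ ∀ i, GWit A (S' : Set G) (T' i) := by
  classical
  obtain ⟨x', ⟨hx'S, hx'x⟩, ⟨b, hb⟩, hyx'⟩ := GPath_first (hS y hy x hx) hxy.symm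
  have hx'x : x' ≠ x := hx'x
  set R : Set G := (S : Set G) \ {x} with hR
  set Sa : Finset G := S.filter (fun z => z ≠ x ∧ GPath A R y z) with hSa
  set Sb : Finset G := S.filter (fun z => z ≠ x ∧ ¬ GPath A R y z) with hSb
  set S' : Finset G := Sa ∪ Sb.image (fun z => u⁻¹ * z) with hS'
  have hya : y ∈ Sa := by
    simp only [hSa, Finset.mem_filter]
    exact ⟨hy, hxy.symm, Relation.ReflTransGen.refl⟩
  have hx'a : x' ∈ Sa := by
    simp only [hSa, Finset.mem_filter]
    exact ⟨hx'S, hx'x, hyx'⟩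
  have haS : ∀ z ∈ Sa, z ∈ S' := fun z hz => Finset.mem_union_left _ hz
  have hbS : ∀ z ∈ Sb, u⁻¹ * z ∈ S' := fun z hz =>
    Finset.mem_union_right _ (Finset.mem_image_of_mem _ hz)
  have huy : u⁻¹ * x = y := by rw [hxu]; simp
  -- neighbours of x of type b lie in Sa
  have hnb : ∀ z ∈ S, z ≠ x → x⁻¹ * z ∈ A b → z ∈ Sa := by
    intro z hz hzx hzb
    simp only [hSa, Finset.mem_filter]
    refine ⟨hz, hzx, Relation.ReflTransGen.tail hyx' ⟨⟨hx'S, hx'x⟩, ⟨hz, hzx⟩, b, ?_⟩⟩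
    exact inv_mul_mem_trans (inv_mul_mem_comm hb) hzb
  have hpa : ∀ z ∈ Sa, GPath A (S' : Set G) y z := by
    intro z hz
    have hz' := (Finset.mem_filter.1 hz).2.2
    clear hz
    have : GPath A (S' : Set G) y z ∧ (z = y ∨ z ∈ Sa) := by
      induction hz' with
      | refl => exact ⟨Relation.ReflTransGen.refl, Or.inl rfl⟩
      | @tail c d h1 h2 ih =>
        have hd : d ∈ Sa := by
          simp only [hSa, Finset.mem_filter]
          exact ⟨h2.2.1.1, h2.2.1.2, Relation.ReflTransGen.tail h1 h2⟩
        have hc : c ∈ Sa := by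
          rcases ih.2 with rfl | h
          · exact hya
          · exact h
        exact ⟨Relation.ReflTransGen.tail ih.1 ⟨haS _ hc, haS _ hd, h2.2.2⟩, Or.inr hd⟩
    exact this.1
  have hpb : ∀ z ∈ Sb, GPath A (S' : Set G) y (u⁻¹ * z) := by
    intro z hz
    obtain ⟨hzS, hzx, hzn⟩ := Finset.mem_filter.1 hz
    obtain ⟨z', ⟨hz'S, hz'x⟩, ⟨b', hb'⟩, hp⟩ := GPath_first (hS z hzS x hx) hzx
    have hp' : GPath A (Sb : Set G) z z' ∧ z' ∈ Sb := by
      clear hb' hz'S hz'x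
      induction hp with
      | refl => exact ⟨Relation.ReflTransGen.refl, hz⟩
      | @tail c d h1 h2 ih =>
        have hd : d ∈ Sb := by
          simp only [hSb, Finset.mem_filter]
          refine ⟨h2.2.1.1, h2.2.1.2, fun h => ?_⟩
          have hc := (Finset.mem_filter.1 ih.2).2.2
          exact hc (Relation.ReflTransGen.tail h (GAdj_symm h2))
        exact ⟨Relation.ReflTransGen.tail ih.1 ⟨ih.2, hd, h2.2.2⟩, hd⟩
    have h1 : GPath A (S' : Set G) (u⁻¹ * z') (u⁻¹ * z) :=
      GPath_smul u⁻¹ (fun w hw => hbS w hw) (GPath_symm hp'.1)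
    refine Relation.ReflTransGen.head ⟨haS _ hya, hbS _ hp'.2, b', ?_⟩ h1
    rw [← huy]
    simpa [mul_assoc] using hb'
  refine ⟨S', ?_, ⟨y, haS y hya⟩, ?_, ?_⟩
  · have hdis : Disjoint Sa Sb := by
      rw [Finset.disjoint_left]
      intro z h1 h2
      exact (Finset.mem_filter.1 h2).2.2 (Finset.mem_filter.1 h1).2.2
    calc S'.card ≤ Sa.card + (Sb.image (fun z => u⁻¹ * z)).card := Finset.card_union_le _ _
      _ ≤ Sa.card + Sb.card := Nat.add_le_add_left Finset.card_image_le _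
      _ = (Sa ∪ Sb).card := (Finset.card_union_of_disjoint hdis).symm
      _ < S.card := by
        apply Finset.card_lt_card
        rw [Finset.ssubset_iff_of_subset]
        · exact ⟨x, hx, by simp [hSa, hSb]⟩
        · exact Finset.union_subset (Finset.filter_subset _ _) (Finset.filter_subset _ _)
  · have hall : ∀ z ∈ (S' : Set G), GPath A (S' : Set G) y z := by
      intro z hz
      rcases Finset.mem_union.1 (Finset.mem_coe.1 hz) with h | h
      · exact hpa z h
      · obtain ⟨w, hw, rfl⟩ := Finset.mem_image.1 h
        exact hpb w hw
    intro p hp q hq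
    exact Relation.ReflTransGen.trans (GPath_symm (hall p hp)) (hall q hq)
  · -- the half-edge correction
    have hcor : ∀ p ∈ S, ∀ c : Bool, ∃ e ∈ Subgroup.closure (T '' I), ∃ p' ∈ S',
        p⁻¹ * (e * p') ∈ A c := by
      intro p hp c
      by_cases hpx : p = x
      · subst hpx
        by_cases hcb : c = b
        · subst hcb
          exact ⟨1, one_mem _, x', haS _ hx'a, by simpa using hb⟩
        · exact ⟨u, hu, y, haS _ hya, by rw [← hxu]; simp⟩
      · by_cases hpp : GPath A R y p
        · exact ⟨1, one_mem _, p, haS _ (by simp [hSa, hp, hpx, hpp]), by simp⟩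
        · exact ⟨u, hu, u⁻¹ * p, hbS _ (by simp [hSb, hp, hpx, hpp]), by simp⟩
    have hnew : ∀ i, ∃ t, GWit A (S' : Set G) t ∧ (i ∈ I → t = T i) ∧
        (i ∉ I → ∃ c ∈ Subgroup.closure (T '' I), ∃ d ∈ Subgroup.closure (T '' I),
          t = c * T i * d) := by
      intro i
      by_cases hi : i ∈ I
      · refine ⟨T i, ?_, fun _ => rfl, fun h => absurd hi h⟩
        rcases hI i hi with ⟨c, hc⟩ | h | h
        · exact ⟨y, haS _ hya, y, haS _ hya, c, hc⟩
        · refine ⟨x', haS _ hx'a, y, haS _ hya, b, ?_⟩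
          rw [mul_assoc, h]
          exact inv_mul_mem_comm hb
        · refine ⟨y, haS _ hya, x', haS _ hx'a, b, ?_⟩
          rw [← h]
          simpa [mul_assoc] using hb
      · obtain ⟨p, hp, q, hq, c, hc⟩ := hW i
        obtain ⟨e, he, p', hp', h1⟩ := hcor p hp c
        obtain ⟨f, hf, q', hq', h2⟩ := hcor q hq c
        refine ⟨e⁻¹ * T i * f, ⟨p', hp', q', hq', c, ?_⟩, fun h => absurd h hi,
          fun _ => ⟨e⁻¹, inv_mem he, f, hf, rfl⟩⟩
        have := mul_mem (mul_mem (inv_mem h1) hc) h2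
        simpa [mul_assoc] using this
    choose T' h1 h2 h3 using hnew
    exact ⟨T', NE_all T T' I h2 h3, h1⟩

end GrushkoGraph

section GrushkoStar
variable {G : Type*} [Group G] {n : ℕ}

/-- The element attached to a directed edge. -/
def dte (T : Fin n → G) (d : Fin n × Bool) : G := if d.2 then T d.1 else (T d.1)⁻¹

def drev (d : Fin n × Bool) : Fin n × Bool := (d.1, !d.2)

theorem drev_drev (d : Fin n × Bool) : drev (drev d) = d := by simp [drev]

theorem drev_ne (d : Fin n × Bool) : drev d ≠ d := by
  rcases d with ⟨i, _ | _⟩ <;> simp [drev]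

theorem drev_fst (d : Fin n × Bool) : (drev d).1 = d.1 := rfl

theorem dte_drev (T : Fin n → G) (d : Fin n × Bool) : dte T (drev d) = (dte T d)⁻¹ := by
  rcases d with ⟨i, _ | _⟩ <;> simp [drev, dte]

theorem eq_or_drev {d f : Fin n × Bool} (h : d.1 = f.1) : d = f ∨ d = drev f := by
  rcases d with ⟨i, _ | _⟩ <;> rcases f with ⟨j, _ | _⟩ <;> simp_all [drev]

theorem dte_mem (T : Fin n → G) (d : Fin n × Bool) (I : Set (Fin n)) (h : d.1 ∈ I) :
    dte T d ∈ Subgroup.closure (T '' I) := by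
  have : T d.1 ∈ Subgroup.closure (T '' I) := Subgroup.subset_closure ⟨d.1, h, rfl⟩
  unfold dte
  split_ifs
  · exact this
  · exact inv_mem this

/-- Replace the value of the directed edge `f` by `l * dte T f`. -/
def dmod (T : Fin n → G) (f : Fin n × Bool) (l : G) : Fin n → G :=
  Function.update T f.1 (if f.2 then l * T f.1 else T f.1 * l⁻¹)

theorem dte_dmod (T : Fin n → G) (f : Fin n × Bool) (l : G) :
    dte (dmod T f l) f = l * dte T f := by
  rcases f with ⟨j, _ | _⟩ <;> simp [dmod, dte]

theorem dmod_ne (T : Fin n → G) (f : Fin n × Bool) (l : G) (i : Fin n) (h : i ≠ f.1) :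
    dmod T f l i = T i := by
  simp [dmod, h]

theorem dte_dmod_ne (T : Fin n → G) (f : Fin n × Bool) (l : G) (d : Fin n × Bool)
    (h : d.1 ≠ f.1) : dte (dmod T f l) d = dte T d := by
  simp [dte, dmod_ne T f l _ h]

theorem NE_dmod (T : Fin n → G) (f : Fin n × Bool) (l : G) (I : Set (Fin n)) (hf : f.1 ∉ I)
    (hl : l ∈ Subgroup.closure (T '' I)) : NielsenEquiv T (dmod T f l) := by
  unfold dmod
  split_ifs
  · exact NE_left T I _ hf l hl
  · exact NE_right T I _ hf _ (inv_mem hl)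

def DWit (A : Bool → Subgroup G) (S : Set G) (T : Fin n → G) (src : Fin n × Bool → G)
    (τ : Fin n → Bool) : Prop :=
  (∀ d, src d ∈ S) ∧ ∀ d, (src d)⁻¹ * dte T d * src (drev d) ∈ A (τ d.1)

theorem dwit_rev {B : Subgroup G} {T : Fin n → G} {src : Fin n × Bool → G} {d : Fin n × Bool}
    (h : (src d)⁻¹ * dte T d * src (drev d) ∈ B) :
    (src (drev d))⁻¹ * dte T (drev d) * src (drev (drev d)) ∈ B := by
  rw [drev_drev, dte_drev]
  simpa [mul_assoc] using inv_mem h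

/-- The groupoid of type `b`. -/
inductive GR (A : Bool → Subgroup G) (S : Set G) (T : Fin n → G) (src : Fin n × Bool → G)
    (τ : Fin n → Bool) (b : Bool) : G → G → G → Prop
  | nil (x y : G) (hx : x ∈ S) (hy : y ∈ S) (h : x⁻¹ * y ∈ A b) : GR A S T src τ b 1 x y
  | gen (d : Fin n × Bool) (h : τ d.1 = b) : GR A S T src τ b (dte T d) (src d) (src (drev d))
  | mul (u v x y z : G) (h1 : GR A S T src τ b u x y) (h2 : GR A S T src τ b v y z) :
      GR A S T src τ b (u * v) x z

variable {A : Bool → Subgroup G} {S : Set G} {T : Fin n → G} {src : Fin n × Bool → G}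
    {τ : Fin n → Bool} {b : Bool}

theorem GR_inv {u x y : G} (h : GR A S T src τ b u x y) : GR A S T src τ b u⁻¹ y x := by
  induction h with
  | nil x y hx hy h => rw [inv_one]; exact GR.nil y x hy hx (inv_mul_mem_comm h)
  | gen d h =>
    have := GR.gen (A := A) (S := S) (T := T) (src := src) (τ := τ) (b := b) (drev d) h
    rwa [dte_drev, drev_drev] at this
  | mul u v x y z h1 h2 ih1 ih2 => rw [mul_inv_rev]; exact GR.mul _ _ _ _ _ ih2 ih1

theorem GR_mem (hW : DWit A S T src τ) {u x y : G} (h : GR A S T src τ b u x y) :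
    x ∈ S ∧ y ∈ S ∧ x⁻¹ * u * y ∈ A b := by
  induction h with
  | nil x y hx hy h => exact ⟨hx, hy, by simpa using h⟩
  | gen d h => exact ⟨hW.1 _, hW.1 _, h ▸ hW.2 d⟩
  | mul u v x y z h1 h2 ih1 ih2 =>
    refine ⟨ih1.1, ih2.2.1, ?_⟩
    have := mul_mem ih1.2.2 ih2.2.2
    simpa [mul_assoc] using this

def DStar (A : Bool → Subgroup G) (src : Fin n × Bool → G)
    (τ : Fin n → Bool) (b : Bool) (y : G) : Prop :=
  ∀ e f : Fin n × Bool, e.1 ≠ f.1 → τ e.1 = b → τ f.1 = b → y⁻¹ * src e ∈ A b →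
    y⁻¹ * src (drev e) ∉ A b → (src (drev e))⁻¹ * src f ∈ A b → False

open Classical in
noncomputable def dwt (A : Bool → Subgroup G) (src : Fin n × Bool → G)
    (τ : Fin n → Bool) (b : Bool) (y : G) : ℕ :=
  (Finset.univ.filter (fun d : Fin n × Bool => τ d.1 = b ∧ y⁻¹ * src d ∈ A b)).card

theorem dwt_le (A : Bool → Subgroup G) (src : Fin n × Bool → G)
    (τ : Fin n → Bool) (b : Bool) (y : G) : dwt A src τ b y ≤ Fintype.card (Fin n × Bool) :=
  Finset.card_le_univ _

theorem star_step (hW : DWit A S T src τ) {u x y : G} (hR : GR A S T src τ b u x y)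
    (hs : ¬ DStar A src τ b y) : ∃ T' src', NielsenEquiv T T' ∧ DWit A S T' src' τ ∧
      GR A S T' src' τ b u x y ∧ dwt A src τ b y < dwt A src' τ b y := by
  classical
  unfold DStar at hs
  push Not at hs
  obtain ⟨e, f, hef, he, hf, h1, h2, h3, -⟩ := hs
  set T' := dmod T f (dte T e) with hT'
  set src' := Function.update src f (src e) with hsrc'
  have hs1 : ∀ d, d ≠ f → src' d = src d := fun d hd => Function.update_of_ne hd _ _
  have hs2 : src' f = src e := Function.update_self _ _ _
  have hs3 : ∀ d : Fin n × Bool, d.1 ≠ f.1 → src' d = src d := fun d hd =>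
    hs1 d (fun h => hd (h ▸ rfl))
  have ht1 : dte T' f = dte T e * dte T f := dte_dmod _ _ _
  have ht2 : ∀ d : Fin n × Bool, d.1 ≠ f.1 → dte T' d = dte T d := fun d hd =>
    dte_dmod_ne _ _ _ _ hd
  have hrf : src' (drev f) = src (drev f) := hs1 _ (drev_ne f)
  refine ⟨T', src', ?_, ⟨?_, ?_⟩, ?_, ?_⟩
  · exact NE_dmod T f _ {e.1} (fun h => hef h.symm) (dte_mem T e _ rfl)
  · intro d
    by_cases hd : d = f
    · rw [hd, hs2]; exact hW.1 _
    · rw [hs1 d hd]; exact hW.1 _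
  · have key : (src' f)⁻¹ * dte T' f * src' (drev f) ∈ A (τ f.1) := by
      rw [hs2, ht1, hrf, hf]
      have := mul_mem (mul_mem (he ▸ hW.2 e) h3) (hf ▸ hW.2 f)
      simpa [mul_assoc] using this
    intro d
    by_cases hd : d.1 = f.1
    · rcases eq_or_drev hd with rfl | rfl
      · exact key
      · exact dwit_rev key
    · rw [hs3 d hd, ht2 d hd, hs3 (drev d) hd]
      exact hW.2 d
  · have key : GR A S T' src' τ b (dte T f) (src f) (src (drev f)) := by
      have g1 : GR A S T' src' τ b 1 (src f) (src (drev e)) :=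
        GR.nil _ _ (hW.1 _) (hW.1 _) (inv_mul_mem_comm h3)
      have g2 := GR.gen (A := A) (S := S) (T := T') (src := src') (τ := τ) (b := b) (drev e) he
      rw [drev_drev, ht2 (drev e) hef, hs3 e hef, hs3 (drev e) hef, dte_drev] at g2
      have g3 := GR.gen (A := A) (S := S) (T := T') (src := src') (τ := τ) (b := b) f hf
      rw [hs2, ht1, hrf] at g3
      have := GR.mul _ _ _ _ _ (GR.mul _ _ _ _ _ g1 g2) g3
      simpa using this
    clear h1 h2
    induction hR with
    | nil x y hx hy h => exact GR.nil x y hx hy h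
    | mul u v x y z h1 h2 ih1 ih2 => exact GR.mul _ _ _ _ _ ih1 ih2
    | gen d h =>
      by_cases hd : d.1 = f.1
      · rcases eq_or_drev hd with rfl | rfl
        · exact key
        · rw [dte_drev, drev_drev]
          exact GR_inv key
      · have := GR.gen (A := A) (S := S) (T := T') (src := src') (τ := τ) (b := b) d h
        rwa [hs3 d hd, ht2 d hd, hs3 (drev d) hd] at this
  · have hfn : y⁻¹ * src f ∉ A b := fun h =>
      h2 (inv_mul_mem_trans h (inv_mul_mem_comm h3))
    unfold dwt
    apply Finset.card_lt_card
    rw [Finset.ssubset_iff_of_subset]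
    · refine ⟨f, ?_, ?_⟩
      · simp only [Finset.mem_filter, Finset.mem_univ, true_and]
        exact ⟨hf, by rw [hs2]; exact h1⟩
      · simp only [Finset.mem_filter, Finset.mem_univ, true_and]
        exact fun h => hfn h.2
    · intro d hd
      simp only [Finset.mem_filter, Finset.mem_univ, true_and] at hd ⊢
      have hdf : d ≠ f := by
        rintro rfl
        exact hfn hd.2
      rw [hs1 d hdf]
      exact hd

theorem star_exists {u x y : G} (k : ℕ) : ∀ (T : Fin n → G) (src : Fin n × Bool → G),
    Fintype.card (Fin n × Bool) - dwt A src τ b y = k →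
    DWit A S T src τ → GR A S T src τ b u x y →
    ∃ T' src', NielsenEquiv T T' ∧ DWit A S T' src' τ ∧
      GR A S T' src' τ b u x y ∧ DStar A src' τ b y := by
  induction k using Nat.strong_induction_on with
  | _ k ih =>
    intro T src hk hW hR
    by_cases hs : DStar A src τ b y
    · exact ⟨T, src, Relation.ReflTransGen.refl, hW, hR, hs⟩
    · obtain ⟨T1, src1, h1, h2, h3, h4⟩ := star_step hW hR hs
      have h5 := dwt_le A src1 τ b y
      obtain ⟨T2, src2, g1, g2, g3, g4⟩ := ih _ (by omega) T1 src1 rfl h2 h3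
      exact ⟨T2, src2, NE_trans h1 g1, g2, g3, g4⟩

/-- In star position, groupoid elements from `y` have a simple shape. -/
def GG (A : Bool → Subgroup G) (T : Fin n → G) (src : Fin n × Bool → G)
    (τ : Fin n → Bool) (b : Bool) (y : G) (I : Set (Fin n)) (v z : G) : Prop :=
  (y⁻¹ * z ∈ A b ∧ v ∈ Subgroup.closure (T '' I)) ∨
  ∃ e : Fin n × Bool, τ e.1 = b ∧ y⁻¹ * src e ∈ A b ∧ (src (drev e))⁻¹ * z ∈ A b ∧
    y⁻¹ * z ∉ A b ∧ ∃ l ∈ Subgroup.closure (T '' I), v = l * dte T e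

theorem GG_step {y : G} (hs : DStar A src τ b y) {u x z : G}
    (I : Set (Fin n)) (hI : I = {i | τ i = b ∧ ∀ ε, y⁻¹ * src (i, ε) ∈ A b})
    (hR : GR A S T src τ b u x z) :
    ∀ v, GG A T src τ b y I v x → GG A T src τ b y I (v * u) z := by
  induction hR with
  | nil x z hx hz h =>
    intro v hv
    rw [mul_one]
    rcases hv with ⟨h1, h2⟩ | ⟨e, h1, h2, h3, h4, h5⟩
    · exact Or.inl ⟨inv_mul_mem_trans h1 h, h2⟩
    · exact Or.inr ⟨e, h1, h2, inv_mul_mem_trans h3 h,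
        fun h' => h4 (inv_mul_mem_trans h' (inv_mul_mem_comm h)), h5⟩
  | mul u v x y z h1 h2 ih1 ih2 =>
    intro w hw
    rw [← mul_assoc]
    exact ih2 _ (ih1 _ hw)
  | gen d h =>
    intro v hv
    rcases hv with ⟨h1, h2⟩ | ⟨e, h1, h2, h3, h4, l, h5, rfl⟩
    · by_cases hd : y⁻¹ * src (drev d) ∈ A b
      · refine Or.inl ⟨hd, mul_mem h2 (dte_mem T d I ?_)⟩
        rw [hI]
        refine ⟨h, fun ε => ?_⟩
        rcases eq_or_drev (d := (d.1, ε)) (f := d) rfl with hh | hh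
        · rw [hh]; exact h1
        · rw [hh]; exact hd
      · exact Or.inr ⟨d, h, h1, by simp, hd, v, h2, rfl⟩
    · have h6 : y⁻¹ * src (drev e) ∉ A b := fun h' => h4 (inv_mul_mem_trans h' h3)
      by_cases hed : d.1 = e.1
      · rcases eq_or_drev hed with rfl | rfl
        · exact absurd h2 h4
        · rw [drev_drev, dte_drev]
          exact Or.inl ⟨h2, by simpa using h5⟩
      · exact (hs e d (fun h' => hed h'.symm) h1 h h2 h6 h3).elim

theorem grushko_fold (S : Finset G) (hS : GConn A (S : Set G)) (hW : DWit A (S : Set G) T src τ)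
    {u x y : G} (hR : GR A (S : Set G) T src τ b u x y) (hxu : x = u * y) (hxy : x ≠ y) :
    ∃ S' : Finset G, S'.card < S.card ∧ S'.Nonempty ∧ GConn A (S' : Set G) ∧
      ∃ T' : Fin n → G, NielsenEquiv T T' ∧ ∀ i, GWit A (S' : Set G) (T' i) := by
  classical
  suffices H : ∀ (T : Fin n → G) (src : Fin n × Bool → G), DWit A (S : Set G) T src τ →
      GR A (S : Set G) T src τ b u x y → DStar A src τ b y →
      ∃ S' : Finset G, S'.card < S.card ∧ S'.Nonempty ∧ GConn A (S' : Set G) ∧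
      ∃ T' : Fin n → G, NielsenEquiv T T' ∧ ∀ i, GWit A (S' : Set G) (T' i) by
    obtain ⟨T1, src1, h1, h2, h3, h4⟩ := star_exists _ T src rfl hW hR
    obtain ⟨S', g1, g2, g3, T', g4, g5⟩ := H T1 src1 h2 h3 h4
    exact ⟨S', g1, g2, g3, T', NE_trans h1 g4, g5⟩
  clear hR hW
  intro T src hW hR hs
  have hWi : ∀ i, GWit A (S : Set G) (T i) := fun i =>
    ⟨src (i, true), hW.1 _, src (i, false), hW.1 _, τ i, by
      simpa [dte, drev] using hW.2 (i, true)⟩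
  obtain ⟨hx, hy, -⟩ := GR_mem hW hR
  set I : Set (Fin n) := {i | τ i = b ∧ ∀ ε, y⁻¹ * src (i, ε) ∈ A b} with hI
  have hG := GG_step hs I hI (GR_inv hR) 1 (Or.inl ⟨by simp, one_mem _⟩)
  rw [one_mul] at hG
  have hvx : u⁻¹ * x = y := by rw [hxu]; simp
  rcases hG with ⟨-, h2⟩ | ⟨e, h1, h2, h3, h4, l, h5, h6⟩
  · refine grushko_reduce A S hS T x y u hx hy hxy I (by simpa using inv_mem h2) hxu ?_ hWi
    rintro i ⟨hi1, hi2⟩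
    refine Or.inl ⟨b, ?_⟩
    have h7 := hW.2 (i, true)
    simp only [dte, drev, Bool.not_true, if_true, hi1] at h7
    have := mul_mem (mul_mem (hi2 true) h7) (inv_mem (hi2 false))
    simpa [mul_assoc] using this
  · have heI : e.1 ∉ I := by
      rintro ⟨-, h7⟩
      exact h4 (inv_mul_mem_trans (h7 (!e.2)) h3)
    have hd : dte (dmod T e l) e = u⁻¹ := by rw [dte_dmod, ← h6]
    have hcase : dmod T e l e.1 * y = x ∨ dmod T e l e.1 * x = y := by
      unfold dte at hd
      split_ifs at hd with h
      · right; rw [hd, hvx]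
      · left; rw [inv_inj.1 hd, hxu]
    obtain ⟨S', g1, g2, g3, T', g4, g5⟩ := grushko_reduce A S hS (dmod T e l) x y u hx hy hxy
      {e.1} (by
        have := inv_mem (dte_mem (dmod T e l) e {e.1} rfl)
        rwa [hd, inv_inv] at this) hxu (by
        rintro i rfl
        exact Or.inr hcase) (by
        intro i
        by_cases hi : i = e.1
        · subst hi
          rcases hcase with h | h
          · exact ⟨x, hx, y, hy, b, by rw [mul_assoc, h]; simp⟩
          · exact ⟨y, hy, x, hx, b, by rw [mul_assoc, h]; simp⟩
        · rw [dmod_ne T e l i hi]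
          exact hWi i)
    exact ⟨S', g1, g2, g3, T', NE_trans (NE_dmod T e l I heI h5) g4, g5⟩

end GrushkoStar

section GrushkoMain
variable {G : Type*} [Group G] {n : ℕ}

/-- Reduced alternating words are nontrivial. -/
def AltFree (A : Bool → Subgroup G) : Prop :=
  ∀ l : List (Bool × G), (∀ a ∈ l, a.2 ∈ A a.1 ∧ a.2 ≠ 1) →
    l.IsChain (fun a c => a.1 ≠ c.1) → (l.map Prod.snd).prod = 1 → l = []

inductive GRed (A : Bool → Subgroup G) (S : Set G) (T : Fin n → G) (src : Fin n × Bool → G)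
    (τ : Fin n → Bool) : List (Bool × G) → G → G → G → Prop
  | nil (x : G) (hx : x ∈ S) : GRed A S T src τ [] 1 x x
  | cons (b : Bool) (u v x z y : G) (l : List (Bool × G)) (hR : GR A S T src τ b u x z)
      (hne : x⁻¹ * u * z ≠ 1) (hr : GRed A S T src τ l v z y)
      (hl : ∀ c ∈ l.head?, b ≠ c.1) :
      GRed A S T src τ ((b, x⁻¹ * u * z) :: l) (u * v) x y

variable {A : Bool → Subgroup G} {S : Set G} {T : Fin n → G} {src : Fin n × Bool → G}
    {τ : Fin n → Bool}

theorem GRed_spec (hW : DWit A S T src τ) {l : List (Bool × G)} {u x y : G}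
    (h : GRed A S T src τ l u x y) :
    (∀ a ∈ l, a.2 ∈ A a.1 ∧ a.2 ≠ 1) ∧ l.IsChain (fun a c => a.1 ≠ c.1) ∧
      (l.map Prod.snd).prod = x⁻¹ * u * y := by
  induction h with
  | nil x hx => simp
  | cons b u v x z y l hR hne hr hl ih =>
    refine ⟨?_, ?_, ?_⟩
    · intro a ha
      rcases List.mem_cons.1 ha with rfl | ha
      · exact ⟨(GR_mem hW hR).2.2, hne⟩
      · exact ih.1 a ha
    · rw [List.isChain_cons]
      exact ⟨hl, ih.2.1⟩
    · rw [List.map_cons, List.prod_cons, ih.2.2]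
      simp [mul_assoc]

theorem GRed_step
    (hno : ∀ b u x y, GR A S T src τ b u x y → x = u * y → x = y)
    {b : Bool} {u x z : G} (hR : GR A S T src τ b u x z) {l : List (Bool × G)} {v y : G}
    (h : GRed A S T src τ l v z y) : ∃ l', GRed A S T src τ l' (u * v) x y := by
  have triv : ∀ {u x z : G}, GR A S T src τ b u x z → x⁻¹ * u * z = 1 → x = z ∧ u = 1 := by
    intro u x z hR h1
    have h2 : x = u * z := by
      rw [mul_assoc] at h1
      exact (inv_mul_eq_one.1 h1)
    have h3 := hno _ _ _ _ hR h2
    refine ⟨h3, ?_⟩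
    subst h3
    exact (mul_eq_right.1 h2.symm)
  by_cases h1 : x⁻¹ * u * z = 1
  · obtain ⟨rfl, rfl⟩ := triv hR h1
    exact ⟨l, by rwa [one_mul]⟩
  · cases h with
    | nil _ hx => exact ⟨_, GRed.cons b u 1 x z z [] hR h1 (GRed.nil z hx) (by simp)⟩
    | cons b' u' v' _ z' _ l' hR' hne' hr' hl' =>
      by_cases hb : b = b'
      · subst hb
        have hRR := GR.mul _ _ _ _ _ hR hR'
        by_cases h2 : x⁻¹ * (u * u') * z' = 1
        · obtain ⟨rfl, h3⟩ := triv hRR h2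
          exact ⟨l', by rwa [← mul_assoc, h3, one_mul]⟩
        · have := GRed.cons b (u * u') v' x z' y l' hRR h2 hr' hl'
          rw [mul_assoc] at this
          exact ⟨_, by simpa only [mul_assoc] using this⟩
      · exact ⟨_, GRed.cons b u _ x z y _ hR h1 (GRed.cons b' u' v' z z' y l' hR' hne' hr' hl')
          (by simpa using hb)⟩

theorem fold_exists (hA : AltFree A) (hS : GConn A S) (hW : DWit A S T src τ)
    (hT : Subgroup.closure (Set.range T) = ⊤) {x y : G} (hx : x ∈ S) (hy : y ∈ S) (hxy : x ≠ y) :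
    ∃ b u x y, GR A S T src τ b u x y ∧ x = u * y ∧ x ≠ y := by
  by_contra hcon
  have hno : ∀ b u x y, GR A S T src τ b u x y → x = u * y → x = y := by
    intro b u x y h1 h2
    by_contra h3
    exact hcon ⟨b, u, x, y, h1, h2, h3⟩
  have hpath : ∀ {v p q y : G}, GPath A S p q → (∃ l, GRed A S T src τ l v q y) →
      ∃ l, GRed A S T src τ l v p y := by
    intro v p q y hp hq
    induction hp using Relation.ReflTransGen.head_induction_on with
    | refl => exact hq
    | head h1 h2 ih =>
      obtain ⟨l, hl⟩ := ih
      obtain ⟨ha, hc, b, hb⟩ := h1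
      obtain ⟨l', hl'⟩ := GRed_step hno (GR.nil (b := b) _ _ ha hc hb) hl
      exact ⟨l', by rwa [one_mul] at hl'⟩
  have hdir : ∀ (d : Fin n × Bool) (g : G), (∀ x ∈ S, ∀ y ∈ S, ∃ l, GRed A S T src τ l g x y) →
      ∀ x ∈ S, ∀ y ∈ S, ∃ l, GRed A S T src τ l (dte T d * g) x y := by
    intro d g hg x hx y hy
    refine hpath (hS x hx (src d) (hW.1 d)) ?_
    obtain ⟨l, hl⟩ := hg (src (drev d)) (hW.1 _) y hy
    exact GRed_step hno (GR.gen d rfl) hl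
  have hall : ∀ g ∈ Subgroup.closure (Set.range T),
      ∀ x ∈ S, ∀ y ∈ S, ∃ l, GRed A S T src τ l g x y := by
    intro g hg
    induction hg using Subgroup.closure_induction_left with
    | one =>
      intro x hx y hy
      exact hpath (hS x hx y hy) ⟨[], GRed.nil y hy⟩
    | mul_left t ht g hg ih =>
      obtain ⟨j, rfl⟩ := ht
      simpa [dte] using hdir (j, true) g ih
    | inv_mul_cancel t ht g hg ih =>
      obtain ⟨j, rfl⟩ := ht
      simpa [dte] using hdir (j, false) g ih
  obtain ⟨l, hl⟩ := hall (x * y⁻¹) (by rw [hT]; trivial) x hx y hy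
  obtain ⟨h1, h2, h3⟩ := GRed_spec hW hl
  have hl0 := hA l h1 h2 (by rw [h3]; simp)
  subst hl0
  have hnil : ∀ (l : List (Bool × G)) (u x y : G), GRed A S T src τ l u x y → l = [] → x = y := by
    intro l u x y h hl
    cases h with
    | nil => rfl
    | cons => simp at hl
  exact hxy (hnil _ _ _ _ hl rfl)

theorem grushko_core (hA : AltFree A) (k : ℕ) : ∀ (S : Finset G) (T : Fin n → G), S.card = k →
    S.Nonempty → GConn A (S : Set G) → (∀ i, GWit A (S : Set G) (T i)) →
    Subgroup.closure (Set.range T) = ⊤ →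
    ∃ T' : Fin n → G, NielsenEquiv T T' ∧ ∀ i, ∃ b, T' i ∈ A b := by
  induction k using Nat.strong_induction_on with
  | _ k ih =>
    intro S T hk hne hS hW hT
    by_cases h1 : ∃ x ∈ S, ∃ y ∈ S, x ≠ y
    · obtain ⟨x, hx, y, hy, hxy⟩ := h1
      choose p hp q hq τ hτ using hW
      let src : Fin n × Bool → G := fun d => if d.2 then p d.1 else q d.1
      have hD : DWit A (S : Set G) T src τ := by
        refine ⟨?_, ?_⟩
        · rintro ⟨i, _ | _⟩
          · exact hq i
          · exact hp i
        · rintro ⟨i, _ | _⟩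
          · have := inv_mem (hτ i)
            simpa [src, dte, drev, mul_assoc] using this
          · simpa [src, dte, drev] using hτ i
      obtain ⟨b, u, x, y, h1, h2, h3⟩ := fold_exists hA hS hD hT hx hy hxy
      obtain ⟨S', g1, g2, g3, T1, g4, g5⟩ := grushko_fold S hS hD h1 h2 h3
      obtain ⟨T2, f1, f2⟩ := ih _ (hk ▸ g1) S' T1 rfl g2 g3 g5
        (top_le_iff.1 (hT ▸ NE_closure g4))
      exact ⟨T2, NE_trans g4 f1, f2⟩
    · push Not at h1
      obtain ⟨g, hg⟩ := hne
      refine ⟨fun i => g⁻¹ * T i * (g⁻¹)⁻¹, NE_conj T g⁻¹ (by rw [hT]; trivial), fun i => ?_⟩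
      obtain ⟨p, hp, q, hq, b, hb⟩ := hW i
      rw [h1 p hp g hg, h1 q hq g hg] at hb
      exact ⟨b, by simpa using hb⟩

theorem conn_exists (hgen : Subgroup.closure (⋃ b, (A b : Set G)) = ⊤) (g : G) :
    ∃ S : Finset G, 1 ∈ S ∧ g ∈ S ∧ ∀ x ∈ S, GPath A (S : Set G) 1 x := by
  classical
  have step : ∀ (a g : G), (∃ b, a ∈ A b) →
      (∃ S : Finset G, 1 ∈ S ∧ g ∈ S ∧ ∀ x ∈ S, GPath A (S : Set G) 1 x) →
      ∃ S : Finset G, 1 ∈ S ∧ a * g ∈ S ∧ ∀ x ∈ S, GPath A (S : Set G) 1 x := by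
    rintro a g ⟨b, hb⟩ ⟨S, h1, h2, h3⟩
    have hm : ∀ x ∈ S, a * x ∈ insert 1 (S.image (fun x => a * x)) := fun x hx =>
      Finset.mem_insert_of_mem (Finset.mem_image_of_mem _ hx)
    refine ⟨insert 1 (S.image (fun x => a * x)), Finset.mem_insert_self _ _, hm g h2, ?_⟩
    intro x hx
    rcases Finset.mem_insert.1 hx with rfl | hx
    · exact Relation.ReflTransGen.refl
    · obtain ⟨z, hz, rfl⟩ := Finset.mem_image.1 hx
      refine Relation.ReflTransGen.head (b := a * 1)
        ⟨Finset.mem_coe.2 (Finset.mem_insert_self _ _), Finset.mem_coe.2 (hm 1 h1), b, by simpa⟩ ?_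
      exact GPath_smul a (fun x hx => Finset.mem_coe.2 (hm x hx)) (h3 z hz)
  have hg : g ∈ Subgroup.closure (⋃ b, (A b : Set G)) := by rw [hgen]; trivial
  induction hg using Subgroup.closure_induction_left with
  | one =>
    refine ⟨{1}, by simp, by simp, fun x hx => ?_⟩
    rw [Finset.mem_singleton.1 hx]
    exact Relation.ReflTransGen.refl
  | mul_left a ha g hg ih =>
    obtain ⟨b, hb⟩ := Set.mem_iUnion.1 ha
    exact step a g ⟨b, hb⟩ ih
  | inv_mul_cancel a ha g hg ih =>
    obtain ⟨b, hb⟩ := Set.mem_iUnion.1 ha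
    exact step a⁻¹ g ⟨b, inv_mem hb⟩ ih

theorem grushko_abstract (hA : AltFree A) (hgen : Subgroup.closure (⋃ b, (A b : Set G)) = ⊤)
    (T : Fin n → G) (hT : Subgroup.closure (Set.range T) = ⊤) :
    ∃ T' : Fin n → G, NielsenEquiv T T' ∧ ∀ i, ∃ b, T' i ∈ A b := by
  classical
  choose F h1 h2 h3 using fun g => conn_exists hgen g
  set S : Finset G := insert 1 (Finset.univ.biUnion (fun i => F (T i))) with hSdef
  have hsub : ∀ i, ∀ x ∈ F (T i), x ∈ S := fun i x hx =>
    Finset.mem_insert_of_mem (Finset.mem_biUnion.2 ⟨i, Finset.mem_univ _, hx⟩)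
  have h1S : (1 : G) ∈ S := Finset.mem_insert_self _ _
  have hall : ∀ x ∈ S, GPath A (S : Set G) 1 x := by
    intro x hx
    rcases Finset.mem_insert.1 hx with rfl | hx
    · exact Relation.ReflTransGen.refl
    · obtain ⟨i, -, hi⟩ := Finset.mem_biUnion.1 hx
      exact GPath_mono (fun z hz => hsub i z hz) (h3 (T i) x hi)
  refine grushko_core hA _ S T rfl ⟨1, h1S⟩ ?_ ?_ hT
  · intro x hx y hy
    exact Relation.ReflTransGen.trans (GPath_symm (hall x hx)) (hall y hy)
  · intro i
    exact ⟨T i, hsub i _ (h2 _), 1, h1S, true, by simp⟩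

end GrushkoMain

section GrushkoCoprod
open Monoid

universe uH uK
variable (H : Type uH) (K : Type uK) [Group H] [Group K]

def BFam : Bool → Type (max uH uK)
  | true => ULift.{uK} H
  | false => ULift.{uH} K

instance BFamGroup : ∀ b, Group (BFam H K b)
  | true => inferInstanceAs (Group (ULift.{uK} H))
  | false => inferInstanceAs (Group (ULift.{uH} K))

/-- The two factors. -/
def BSub : Bool → Subgroup (Coprod H K)
  | true => (Coprod.inl : H →* Coprod H K).range
  | false => (Coprod.inr : K →* Coprod H K).range

def toI : Coprod H K →* CoprodI (BFam H K) :=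
  Coprod.lift
    ((CoprodI.of (M := BFam H K) (i := true)).comp
      (MulEquiv.ulift.symm.toMonoidHom : H →* ULift.{uK} H))
    ((CoprodI.of (M := BFam H K) (i := false)).comp
      (MulEquiv.ulift.symm.toMonoidHom : K →* ULift.{uH} K))

theorem toI_mem (b : Bool) (g : Coprod H K) (hg : g ∈ BSub H K b) (h1 : g ≠ 1) :
    ∃ m : BFam H K b, m ≠ 1 ∧ toI H K g = CoprodI.of m := by
  cases b with
  | true =>
    obtain ⟨h, rfl⟩ := hg
    refine ⟨(ULift.up h : ULift.{uK} H), ?_, ?_⟩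
    · intro hh
      apply h1
      have : h = 1 := congrArg ULift.down hh
      rw [this, map_one]
    · simp only [toI, Coprod.lift_apply_inl]; rfl
  | false =>
    obtain ⟨h, rfl⟩ := hg
    refine ⟨(ULift.up h : ULift.{uH} K), ?_, ?_⟩
    · intro hh
      apply h1
      have : h = 1 := congrArg ULift.down hh
      rw [this, map_one]
    · simp only [toI, Coprod.lift_apply_inr]; rfl

theorem altFree_coprod : AltFree (BSub H K) := by
  classical
  intro l hl hc hp
  have key : ∀ l : List (Bool × Coprod H K), (∀ a ∈ l, a.2 ∈ BSub H K a.1 ∧ a.2 ≠ 1) →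
      ∃ w : List (Σ b, BFam H K b), w.map Sigma.fst = l.map Prod.fst ∧
        (∀ a ∈ w, a.2 ≠ 1) ∧
        (w.map fun a => CoprodI.of a.2).prod = toI H K (l.map Prod.snd).prod := by
    intro l hl
    induction l with
    | nil => exact ⟨[], by simp⟩
    | cons a l ih =>
      obtain ⟨w, h1, h2, h3⟩ := ih (fun c hc => hl c (List.mem_cons_of_mem _ hc))
      obtain ⟨m, hm, hm'⟩ := toI_mem H K a.1 a.2 (hl a List.mem_cons_self).1
        (hl a List.mem_cons_self).2
      refine ⟨⟨a.1, m⟩ :: w, by simp [h1], ?_, by simp [h3, hm']⟩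
      intro c hc
      rcases List.mem_cons.1 hc with rfl | hc
      · exact hm
      · exact h2 c hc
  obtain ⟨w, h1, h2, h3⟩ := key l hl
  have hchain : w.IsChain (fun a c => a.1 ≠ c.1) := by
    have hc' : (l.map Prod.fst).IsChain (fun a c => a ≠ c) := by
      rw [List.isChain_map]; exact hc
    rw [← h1, List.isChain_map] at hc'
    exact hc'
  let W : CoprodI.Word (BFam H K) := ⟨w, h2, hchain⟩
  have hW : W.prod = (CoprodI.Word.empty : CoprodI.Word (BFam H K)).prod := by
    rw [CoprodI.Word.prod_empty]
    have : W.prod = toI H K (l.map Prod.snd).prod := h3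
    rw [this, hp, map_one]
  have hWe : W = CoprodI.Word.empty := (CoprodI.Word.equiv (M := BFam H K)).symm.injective hW
  have hw : w = [] := congrArg CoprodI.Word.toList hWe
  rw [hw] at h1
  simpa using h1.symm

theorem gen_coprod : Subgroup.closure (⋃ b, (BSub H K b : Set (Coprod H K))) = ⊤ := by
  rw [← top_le_iff, ← Coprod.closure_range_inl_union_inr]
  apply Subgroup.closure_mono
  rintro g (hg | hg)
  · exact Set.mem_iUnion.2 ⟨true, hg⟩
  · exact Set.mem_iUnion.2 ⟨false, hg⟩

end GrushkoCoprod

/-- **Grushko's theorem.** Any generating tuple of a free product `H ∗ K` is Nielsen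
equivalent to a tuple whose first `s` entries come from (the canonical image of) `H` and
whose remaining entries come from (the canonical image of) `K`. -/
theorem grushko_nielsen_free_product {H K : Type*} [Group H] [Group K] {n : ℕ}
    (T : Fin n → Monoid.Coprod H K)
    (hT : Subgroup.closure (Set.range T) = ⊤) :
    ∃ s : ℕ, s ≤ n ∧ ∃ T' : Fin n → Monoid.Coprod H K,
      NielsenEquiv T T' ∧
      (∀ i : Fin n, (i : ℕ) < s → ∃ h : H, T' i = Monoid.Coprod.inl h) ∧
      (∀ i : Fin n, s ≤ (i : ℕ) → ∃ k : K, T' i = Monoid.Coprod.inr k) := by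
  classical
  obtain ⟨T1, h1, h2⟩ := grushko_abstract (altFree_coprod H K) (gen_coprod H K) T hT
  choose β hβ using h2
  let f : Fin n → ℕ := fun i => if β i = true then 0 else 1
  have hmono : Monotone (f ∘ Tuple.sort f) := Tuple.monotone_sort f
  set σ := Tuple.sort f with hσ
  have hfin : ∀ s : ℕ, s ≤ n → (∀ i : Fin n, (i : ℕ) < s → β (σ i) = true) →
      (∀ i : Fin n, s ≤ (i : ℕ) → β (σ i) = false) →
      ∃ s : ℕ, s ≤ n ∧ ∃ T' : Fin n → Monoid.Coprod H K,
      NielsenEquiv T T' ∧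
      (∀ i : Fin n, (i : ℕ) < s → ∃ h : H, T' i = Monoid.Coprod.inl h) ∧
      (∀ i : Fin n, s ≤ (i : ℕ) → ∃ k : K, T' i = Monoid.Coprod.inr k) := by
    intro s hs ha hb
    refine ⟨s, hs, T1 ∘ σ, NE_trans h1 (NE_perm T1 σ), ?_, ?_⟩
    · intro i hi
      have := hβ (σ i)
      rw [ha i hi] at this
      obtain ⟨h, hh⟩ := this
      exact ⟨h, hh.symm⟩
    · intro i hi
      have := hβ (σ i)
      rw [hb i hi] at this
      obtain ⟨h, hh⟩ := this
      exact ⟨h, hh.symm⟩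
  by_cases hex : ∃ m : ℕ, ∃ h : m < n, β (σ ⟨m, h⟩) = false
  · obtain ⟨hlt, hm⟩ := Nat.find_spec hex
    refine hfin (Nat.find hex) hlt.le ?_ ?_
    · intro i hi
      have := Nat.find_min hex hi
      by_contra hc
      exact this ⟨i.2, by simpa using hc⟩
    · intro i hi
      have h3 := hmono (show (⟨Nat.find hex, hlt⟩ : Fin n) ≤ i from hi)
      by_contra hc
      have hc' : β (σ i) = true := by simpa using hc
      simp [f, hm, hc'] at h3
  · push Not at hex
    refine hfin n le_rfl (fun i _ => by simpa using hex i i.2) (fun i hi => absurd i.2 (by omega))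
end

section
/- Let m ≥ 0, r ≥ 0 and p₁,…,p_r ≥ 2 be integers, and let G = F ∗ (ℤ/p₁ℤ) ∗ ⋯ ∗ (ℤ/p_rℤ) be the free product of a free group F with free basis x₁,…,x_m and finite cyclic groups of orders p₁,…,p_r with generators s₁,…,s_r. Then every generating n-tuple of G satisfies n ≥ m + r and is Nielsen equivalent to a tuple of the form (x₁,…,x_m, s₁^{ν₁},…,s_r^{ν_r}, 1,…,1), where each ν_i is a positive integer with gcd(ν_i, p_i) = 1. -/
/-- The family consisting of a free group of rank `m` (index `none`) and finite cyclic
groups of orders `p₁, …, p_r` (indices `some i`). -/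
def FPFactor (m r : ℕ) (p : Fin r → ℕ) : Option (Fin r) → Type :=
  fun o => match o with
  | none => FreeGroup (Fin m)
  | some i => Multiplicative (ZMod (p i))

instance instGroupFPFactor (m r : ℕ) (p : Fin r → ℕ) :
    ∀ o : Option (Fin r), Group (FPFactor m r p o)
  | none => inferInstanceAs (Group (FreeGroup (Fin m)))
  | some i => inferInstanceAs (Group (Multiplicative (ZMod (p i))))


namespace Grushko

open Function

section Nielsen
variable {G : Type} [Group G] {n : ℕ}

theorem ne_refl (T : Fin n → G) : NielsenEquiv T T := Relation.ReflTransGen.refl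

theorem ne_trans {T T' T'' : Fin n → G} (h : NielsenEquiv T T') (h' : NielsenEquiv T' T'') :
    NielsenEquiv T T'' := Relation.ReflTransGen.trans h h'

theorem ne_inv (T : Fin n → G) (i : Fin n) : NielsenEquiv T (update T i (T i)⁻¹) :=
  Relation.ReflTransGen.single (NielsenStep.inv T i)

theorem ne_mul (T : Fin n → G) {i j : Fin n} (hij : i ≠ j) :
    NielsenEquiv T (update T i (T i * T j)) :=
  Relation.ReflTransGen.single (NielsenStep.mul T i j hij)

theorem ne_mulinv (T : Fin n → G) {i j : Fin n} (hij : i ≠ j) :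
    NielsenEquiv T (update T i (T i * (T j)⁻¹)) := by
  have h1 := ne_inv T j
  have h2 := ne_trans h1 (ne_mul _ hij)
  have h3 := ne_trans h2 (ne_inv _ j)
  convert h3 using 1
  funext k
  by_cases hk : k = j
  · subst hk; simp [hij.symm]
  · by_cases hk' : k = i
    · subst hk'; simp [hij]
    · simp [hk, hk']

theorem ne_symm {T T' : Fin n → G} (h : NielsenEquiv T T') : NielsenEquiv T' T := by
  induction h with
  | refl => exact ne_refl _
  | tail _ hs ih =>
    refine ne_trans ?_ ih
    cases hs with
    | inv i => convert ne_inv _ i using 1; simp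
    | swap i j hij =>
      refine Relation.ReflTransGen.single ?_
      convert NielsenStep.swap _ i j hij using 1
      funext k; simp
    | mul i j hij =>
      convert ne_mulinv _ hij using 1
      simp [hij.symm]

theorem ne_mulR (T : Fin n → G) (S : Set (Fin n)) (k : Fin n) (hk : k ∉ S) (r : G)
    (hr : r ∈ Subgroup.closure (T '' S)) :
    ∀ g, NielsenEquiv (update T k g) (update T k (g * r)) := by
  induction hr using Subgroup.closure_induction with
  | mem r hr =>
    obtain ⟨j, hj, rfl⟩ := hr
    intro g
    have hkj : k ≠ j := fun h => hk (h ▸ hj)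
    convert ne_mul (update T k g) hkj using 1
    simp [hkj.symm]
  | one => intro g; rw [mul_one]; exact ne_refl _
  | mul a b _ _ iha ihb =>
    intro g
    rw [← mul_assoc]
    exact ne_trans (iha g) (ihb _)
  | inv a _ iha =>
    intro g
    have := ne_symm (iha (g * a⁻¹))
    simpa using this

theorem ne_mulL (T : Fin n → G) (S : Set (Fin n)) (k : Fin n) (hk : k ∉ S) (r : G)
    (hr : r ∈ Subgroup.closure (T '' S)) (g : G) :
    NielsenEquiv (update T k g) (update T k (r * g)) := by
  have h1 := ne_inv (update T k g) k
  simp only [update_self, update_idem] at h1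
  have h2 := ne_mulR T S k hk r⁻¹ (inv_mem hr) g⁻¹
  have h3 := ne_inv (update T k (g⁻¹ * r⁻¹)) k
  simp only [update_self, update_idem] at h3
  have := ne_trans (ne_trans h1 h2) h3
  simpa using this

theorem ne_family (T T' : Fin n → G) (S : Set (Fin n)) (hS : ∀ k ∈ S, T' k = T k)
    (hn : ∀ k ∉ S, ∃ l ∈ Subgroup.closure (T '' S), ∃ r ∈ Subgroup.closure (T '' S),
      T' k = l * T k * r) : NielsenEquiv T T' := by
  classical
  have key : ∀ F : Finset (Fin n), NielsenEquiv T (fun k => if k ∈ F then T' k else T k) := by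
    intro F
    induction F using Finset.induction_on with
    | empty => simpa using ne_refl T
    | insert a F ha ih =>
      refine ne_trans ih ?_
      set U : Fin n → G := fun k => if k ∈ F then T' k else T k with hU
      have hUS : U '' S = T '' S := by
        apply Set.image_congr
        intro k hk
        simp only [hU]
        split_ifs
        · exact hS k hk
        · rfl
      have hUa : U a = T a := by simp [hU, ha]
      have hnew : (fun k => if k ∈ insert a F then T' k else T k) = update U a (T' a) := by
        funext k
        by_cases hk : k = a
        · subst hk; simp
        · simp [hk, hU]
      rw [hnew]
      by_cases haS : a ∈ S
      · rw [hS a haS, ← hUa, update_eq_self]; exact ne_refl _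
      · obtain ⟨l, hl, r, hr, e⟩ := hn a haS
        rw [e]
        have h1 := ne_mulL U S a haS l (by rwa [hUS]) (T a)
        have h2 := ne_mulR U S a haS r (by rwa [hUS]) (l * T a)
        have := ne_trans h1 h2
        rwa [← hUa, update_eq_self, hUa] at this
  simpa using key Finset.univ

theorem ne_perm (T : Fin n → G) (π : Equiv.Perm (Fin n)) : NielsenEquiv T (T ∘ π) := by
  induction π using Equiv.Perm.swap_induction_on generalizing T with
  | one => exact ne_refl _
  | swap_mul f x y hxy ih =>
    have h1 : NielsenEquiv T (T ∘ Equiv.swap x y) :=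
      Relation.ReflTransGen.single (NielsenStep.swap T x y hxy)
    exact ne_trans h1 (ih _)

theorem ne_closure {T T' : Fin n → G} (h : NielsenEquiv T T') :
    Subgroup.closure (Set.range T') ≤ Subgroup.closure (Set.range T) := by
  induction h with
  | refl => exact le_rfl
  | @tail U W _ hs ih =>
    refine le_trans ?_ ih
    rw [Subgroup.closure_le]
    have hm : ∀ k, U k ∈ Subgroup.closure (Set.range U) :=
      fun k => Subgroup.subset_closure ⟨k, rfl⟩
    rintro _ ⟨k, rfl⟩
    cases hs with
    | inv i =>
      by_cases hk : k = i
      · subst hk; simpa using hm k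
      · simpa [hk] using hm k
    | swap i j hij => exact hm _
    | mul i j hij =>
      by_cases hk : k = i
      · subst hk; simpa using mul_mem (hm k) (hm j)
      · simpa [hk] using hm k

end Nielsen

section Conn
variable {G : Type} [Group G] {K : Type} (s : K → G)

/-- Adjacency: right multiplication by a power of some `s k`. -/
def Adj (x y : G) : Prop := ∃ (k : K) (e : ℤ), y = x * s k ^ e

/-- Reachability from `a` inside `X`. -/
inductive Rch (X : Set G) (a : G) : G → Prop
  | base : a ∈ X → Rch X a a
  | step {b c : G} : Rch X a b → Adj s b c → c ∈ X → Rch X a c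

/-- Connected sets containing `1`. -/
def Conn (V : Set G) : Prop := 1 ∈ V ∧ ∀ v ∈ V, Rch s V 1 v

variable {s}

theorem Adj.symm {x y : G} (h : Adj s x y) : Adj s y x := by
  obtain ⟨k, e, rfl⟩ := h
  exact ⟨k, -e, by simp⟩

theorem Adj.left {x y : G} (h : Adj s x y) (g : G) : Adj s (g * x) (g * y) := by
  obtain ⟨k, e, rfl⟩ := h
  exact ⟨k, e, by rw [mul_assoc]⟩

theorem Rch.mem {X : Set G} {a b : G} (h : Rch s X a b) : b ∈ X := by
  cases h <;> assumption

theorem Rch.base_mem {X : Set G} {a b : G} (h : Rch s X a b) : a ∈ X := by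
  induction h <;> assumption

theorem Rch.trans {X : Set G} {a b c : G} (h : Rch s X a b) (h' : Rch s X b c) : Rch s X a c := by
  induction h' with
  | base _ => exact h
  | step _ ha hc ih => exact ih.step ha hc

theorem Rch.mono {X Y : Set G} (hXY : X ⊆ Y) {a b : G} (h : Rch s X a b) : Rch s Y a b := by
  induction h with
  | base h => exact .base (hXY h)
  | step _ ha hc ih => exact ih.step ha (hXY hc)

theorem Rch.map {X Y : Set G} (g : G) (hXY : ∀ x ∈ X, g * x ∈ Y) {a b : G} (h : Rch s X a b) :
    Rch s Y (g * a) (g * b) := by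
  induction h with
  | base h => exact .base (hXY _ h)
  | step _ ha hc ih => exact ih.step (ha.left g) (hXY _ hc)

theorem sep {V P Q : Set G} (hPQ : ∀ a ∈ P, a ∉ Q) (hV : Conn s V) {w : G} (hw : w ∈ V)
    (hwP : w ∈ P) : (∃ p ∈ P, Rch s (V \ Q) 1 p) ∨ ∃ q ∈ Q, Rch s (V \ P) 1 q := by
  by_contra hcon
  push Not at hcon
  obtain ⟨h1, h2⟩ := hcon
  have key : ∀ w, Rch s V 1 w → Rch s ((V \ P) \ Q) 1 w := by
    intro w hw
    induction hw with
    | base h =>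
      refine .base ⟨⟨h, fun hp => ?_⟩, fun hq => ?_⟩
      · exact h1 1 hp (.base ⟨h, hPQ _ hp⟩)
      · exact h2 1 hq (.base ⟨h, fun hp => hPQ _ hp hq⟩)
    | @step b c _ ha hc ih =>
      refine ih.step ha ⟨⟨hc, fun hp => ?_⟩, fun hq => ?_⟩
      · exact h1 c hp ((ih.mono (Y := V \ Q) (fun x hx => ⟨hx.1.1, hx.2⟩)).step ha ⟨hc, hPQ _ hp⟩)
      · exact h2 c hq ((ih.mono (Y := V \ P) (fun x hx => hx.1)).step ha ⟨hc, fun hp => hPQ _ hp hq⟩)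
  exact (key w (hV.2 w hw)).mem.1.2 hwP

open Classical in
/-- The piecewise translation. -/
noncomputable def tau (A : Set G) (h g : G) : G := if g ∈ A then g else h * g

theorem tau_pos {A : Set G} {h g : G} (hg : g ∈ A) : tau A h g = g := by simp [tau, hg]
theorem tau_neg {A : Set G} {h g : G} (hg : g ∉ A) : tau A h g = h * g := by simp [tau, hg]

theorem sepB {V Q : Set G} (hV : Conn s V) (h1 : (1 : G) ∉ Q) {b : G} (hb : b ∈ V)
    (hbA : ¬ Rch s (V \ Q) 1 b) :
    ∃ q ∈ Q, Rch s {x | x ∈ V ∧ ¬ Rch s (V \ Q) 1 x} q b := by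
  have key : ∀ w, Rch s V 1 w → Rch s (V \ Q) 1 w ∨
      ∃ q ∈ Q, Rch s {x | x ∈ V ∧ ¬ Rch s (V \ Q) 1 x} q w := by
    intro w hw
    induction hw with
    | base h => exact Or.inl (.base ⟨h, h1⟩)
    | @step b c _ ha hc ih =>
      by_cases hcA : Rch s (V \ Q) 1 c
      · exact Or.inl hcA
      · right
        rcases ih with ih | ⟨q, hq, ih⟩
        · by_cases hcQ : c ∈ Q
          · exact ⟨c, hcQ, .base ⟨hc, hcA⟩⟩
          · exact absurd (ih.step ha ⟨hc, hcQ⟩) hcA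
        · exact ⟨q, hq, ih.step ha ⟨hc, hcA⟩⟩
  exact (key b (hV.2 b hb)).resolve_left hbA

theorem cross {V Q : Set G} (hV : Conn s V) (h1 : (1 : G) ∉ Q) {b : G} (hb : b ∈ V)
    (hbA : ¬ Rch s (V \ Q) 1 b) :
    ∃ p q, Rch s (V \ Q) 1 p ∧ q ∈ V ∧ ¬ Rch s (V \ Q) 1 q ∧ Adj s p q := by
  have key : ∀ w, Rch s V 1 w → Rch s (V \ Q) 1 w ∨
      ∃ p q, Rch s (V \ Q) 1 p ∧ q ∈ V ∧ ¬ Rch s (V \ Q) 1 q ∧ Adj s p q := by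
    intro w hw
    induction hw with
    | base h => exact Or.inl (.base ⟨h, h1⟩)
    | @step b c _ ha hc ih =>
      by_cases hcA : Rch s (V \ Q) 1 c
      · exact Or.inl hcA
      · right
        rcases ih with ih | ih
        · exact ⟨b, c, ih, hc, hcA, ha⟩
        · exact ih
  exact (key b (hV.2 b hb)).resolve_left hbA

theorem rch_self {X : Set G} {a b : G} (h : Rch s X a b) :
    Rch s {x | Rch s X a x} a b := by
  induction h with
  | base h => exact .base (.base h)
  | step h ha hc ih => exact ih.step ha (h.step ha hc)

theorem move {V Q : Set G} (hV : Conn s V) (h1 : (1 : G) ∉ Q) (h : G)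
    (hQ : ∀ q ∈ Q, q ∈ V → ∃ a, Rch s (V \ Q) 1 a ∧ Adj s a (h * q)) :
    Conn s (tau {a | Rch s (V \ Q) 1 a} h '' V) := by
  set A : Set G := {a | Rch s (V \ Q) 1 a} with hA
  have hAV : A ⊆ tau A h '' V := fun a ha => ⟨a, (Rch.mem ha).1, tau_pos ha⟩
  have h1A : (1 : G) ∈ A := .base ⟨hV.1, h1⟩
  refine ⟨hAV h1A, ?_⟩
  rintro _ ⟨v, hv, rfl⟩
  by_cases hvA : v ∈ A
  · rw [tau_pos hvA]
    exact (rch_self hvA).mono hAV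
  · rw [tau_neg hvA]
    obtain ⟨q, hq, hr⟩ := sepB hV h1 hv hvA
    have hBV : ∀ x ∈ {x | x ∈ V ∧ ¬ Rch s (V \ Q) 1 x}, h * x ∈ tau A h '' V :=
      fun x hx => ⟨x, hx.1, tau_neg hx.2⟩
    obtain ⟨a, ha, hadj⟩ := hQ q hq hr.base_mem.1
    have h3 := hr.map h hBV
    exact (((rch_self ha).mono hAV).step hadj h3.base_mem).trans h3

end Conn

section Grushko
variable {G : Type} [Group G] {K : Type} (s : K → G) {n : ℕ}

/-- A representation of the tuple `T` by a finite connected set `V` and labelled edges. -/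
structure Good (V : Finset G) (c : Fin n → K) (x : Fin n → G) (e : Fin n → ℤ) (y : Fin n → G)
    (T : Fin n → G) : Prop where
  conn : Conn s (V : Set G)
  hx : ∀ j, x j ∈ V
  hy : ∀ j, y j ∈ V
  hT : ∀ j, T j = x j * s (c j) ^ e j * (y j)⁻¹

/-- The coset of `g` modulo the powers of `s i`. -/
def cs (i : K) (g : G) : G ⧸ Subgroup.zpowers (s i) := QuotientGroup.mk g

variable {s}

theorem cs_eq {i : K} {a b : G} : cs s i a = cs s i b ↔ ∃ z : ℤ, b = a * s i ^ z := by
  unfold cs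
  rw [QuotientGroup.eq, Subgroup.mem_zpowers_iff]
  constructor
  · rintro ⟨z, hz⟩; exact ⟨z, by rw [hz]; group⟩
  · rintro ⟨z, rfl⟩; exact ⟨z, by group⟩

open Classical in
theorem move_good {V : Finset G} {c : Fin n → K} {x : Fin n → G} {e : Fin n → ℤ} {y : Fin n → G}
    {T : Fin n → G} (hG : Good s V c x e y T) {Q : Set G} (h1 : (1 : G) ∉ Q) (h : G)
    (hQ : ∀ q ∈ Q, q ∈ V → ∃ a, Rch s (V \ Q) 1 a ∧ Adj s a (h * q))
    (S : Set (Fin n)) (hS : h ∈ Subgroup.closure (T '' S))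
    {c' : Fin n → K} {x' : Fin n → G} {e' : Fin n → ℤ} {y' : Fin n → G}
    {V' : Finset G} (hV' : V' = V.image (tau {a | Rch s (V \ Q) 1 a} h))
    (hn : ∀ k ∉ S, c' k = c k ∧ e' k = e k ∧ x' k = tau {a | Rch s (V \ Q) 1 a} h (x k) ∧
      y' k = tau {a | Rch s (V \ Q) 1 a} h (y k))
    (hs : ∀ k ∈ S, x' k ∈ V' ∧ y' k ∈ V' ∧ T k = x' k * s (c' k) ^ e' k * (y' k)⁻¹) :
    ∃ T', NielsenEquiv T T' ∧ Good s V' c' x' e' y' T' := by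
  have htau : ∀ g, ∃ t ∈ Subgroup.closure (T '' S),
      tau {a | Rch s (V \ Q) 1 a} h g = t * g := by
    intro g
    by_cases hg : g ∈ {a | Rch s (V \ Q) 1 a}
    · exact ⟨1, one_mem _, by rw [tau_pos hg, one_mul]⟩
    · exact ⟨h, hS, by rw [tau_neg hg]⟩
  refine ⟨fun k => x' k * s (c' k) ^ e' k * (y' k)⁻¹, ?_, ?_, ?_, ?_, fun _ => rfl⟩
  · refine ne_family T _ S (fun k hk => (hs k hk).2.2.symm) ?_
    intro k hk
    obtain ⟨hc, he, hx, hy⟩ := hn k hk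
    obtain ⟨t, ht, htx⟩ := htau (x k)
    obtain ⟨t', ht', hty⟩ := htau (y k)
    refine ⟨t, ht, t'⁻¹, inv_mem ht', ?_⟩
    rw [hc, he, hx, hy, htx, hty, hG.hT k]
    group
  · rw [hV', Finset.coe_image]
    exact move hG.conn h1 h hQ
  · intro k
    by_cases hk : k ∈ S
    · exact (hs k hk).1
    · rw [(hn k hk).2.2.1, hV']; exact Finset.mem_image_of_mem _ (hG.hx k)
  · intro k
    by_cases hk : k ∈ S
    · exact (hs k hk).2.1
    · rw [(hn k hk).2.2.2, hV']; exact Finset.mem_image_of_mem _ (hG.hy k)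

theorem fold {V : Finset G} {c : Fin n → K} {x : Fin n → G} {e : Fin n → ℤ} {y : Fin n → G}
    {T : Fin n → G} (hG : Good s V c x e y T) (i : K)
    (hloop : ∀ k, c k = i → cs s i (x k) = cs s i (y k)) {v w : G} (hv : v ∈ V) (hw : w ∈ V)
    (hvw : v ≠ w)
    (hcl : v * w⁻¹ ∈ Subgroup.closure (T '' {k | c k = i ∧ cs s i (x k) = cs s i v}))
    (hr : Rch s ((V : Set G) \ {w}) 1 v) :
    ∃ T' V' c' x' e' y', NielsenEquiv T T' ∧ Good s V' c' x' e' y' T' ∧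
      V'.card < V.card := by
  classical
  set A : Set G := {a | Rch s ((V : Set G) \ {w}) 1 a} with hA
  set S := {k | c k = i ∧ cs s i (x k) = cs s i v} with hS
  have hvA : v ∈ A := hr
  have hwA : w ∉ A := fun h => (Rch.mem h).2 rfl
  have hloopS : ∀ k ∈ S, ∃ z : ℤ, T k = v * s i ^ z * v⁻¹ := by
    intro k hk
    obtain ⟨hc, hkx⟩ := hk
    have hky : cs s i (y k) = cs s i v := by rw [← hloop k hc, hkx]
    obtain ⟨z1, hz1⟩ := cs_eq.1 hkx.symm
    obtain ⟨z2, hz2⟩ := cs_eq.1 hky.symm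
    refine ⟨z1 + e k - z2, ?_⟩
    rw [hG.hT k, hc, hz1, hz2]
    group
  choose! z hz using hloopS
  obtain ⟨T', hne, hg⟩ := move_good hG (Q := {w}) (fun h => hr.base_mem.2 h) (v * w⁻¹)
    (by
      rintro q rfl _
      exact ⟨v, hr, i, 0, by group⟩) S hcl rfl
    (c' := c) (e' := fun k => if k ∈ S then z k else e k)
    (x' := fun k => if k ∈ S then v else tau A (v * w⁻¹) (x k))
    (y' := fun k => if k ∈ S then v else tau A (v * w⁻¹) (y k))
    (by
      intro k hk
      simp [hk, hA])
    (by
      intro k hk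
      have hv' : v ∈ V.image (tau A (v * w⁻¹)) := Finset.mem_image.2 ⟨v, hv, tau_pos hvA⟩
      simp only [hk, if_true]
      refine ⟨hv', hv', ?_⟩
      rw [hz k hk, hk.1])
  refine ⟨T', _, _, _, _, _, hne, hg, ?_⟩
  refine lt_of_le_of_ne Finset.card_image_le fun hcard => hvw ?_
  refine Finset.card_image_iff.1 hcard hv hw ?_
  rw [tau_pos hvA, tau_neg hwA]; group

/-- A permutation modelling the action of `s i` on a set containing `V`. -/
def PAct (s : K → G) (q : ℕ) (V : Finset G) (i : K) (E : G → ℤ → G → Prop) : Prop :=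
  ∃ (Ω : Type) (_ : Countable Ω) (σ : Equiv.Perm Ω) (ι : G → Ω), σ ^ q = 1 ∧
    Set.InjOn ι V ∧ (∀ v ∈ V, ∀ z : ℤ, v * s i ^ z ∈ V → (σ ^ z) (ι (v * s i ^ z)) = ι v) ∧
    ∀ a z b, E a z b → (σ ^ z) (ι b) = ι a

open Classical in
theorem merge {V : Finset G} {c : Fin n → K} {x : Fin n → G} {e : Fin n → ℤ} {y : Fin n → G}
    {T : Fin n → G} (hG : Good s V c x e y T) (q : ℕ) (i : K) (j : Fin n)
    {u v : G} {f : ℤ} (hu : u ∈ V) (hv : v ∈ V) (huv : cs s i u ≠ cs s i v)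
    (hTj : T j = u * s i ^ f * v⁻¹ ∨ T j = (u * s i ^ f * v⁻¹)⁻¹)
    (hr : Rch s ((V : Set G) \ {g | cs s i g = cs s i v}) 1 u) :
    ∃ T' V' c' x' e' y', NielsenEquiv T T' ∧ Good s V' c' x' e' y' T' ∧
      V'.card ≤ V.card ∧ (V'.image (cs s i)).card < (V.image (cs s i)).card ∧
      (V.card ≤ V'.card →
        PAct s q V' i (fun a z b => ∃ k, c' k = i ∧ a = x' k ∧ z = e' k ∧ b = y' k) →
        PAct s q V i (fun a z b => (∃ k, k ≠ j ∧ c k = i ∧ a = x k ∧ z = e k ∧ b = y k) ∨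
          (a = u ∧ z = f ∧ b = v))) := by
  set Q : Set G := {g | cs s i g = cs s i v} with hQdef
  set A : Set G := {a | Rch s ((V : Set G) \ Q) 1 a} with hA
  set h : G := u * s i ^ f * v⁻¹ with hh
  have huA : u ∈ A := hr
  have hvA : v ∉ A := fun h => (Rch.mem h).2 rfl
  have h1 : (1 : G) ∉ Q := fun h => hr.base_mem.2 h
  have hside : ∀ a b, b ∈ V → cs s i a = cs s i b → a ∈ A → b ∈ A := by
    intro a b hb hab ha
    obtain ⟨z, hz⟩ := cs_eq.1 hab
    refine Rch.step ha ⟨i, z, hz⟩ ⟨hb, fun hbQ => (Rch.mem ha).2 ?_⟩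
    exact hab.trans hbQ
  obtain ⟨p, q0, hp, hq0, hq0A, k0, b, hb⟩ := cross hG.conn h1 hv hvA
  have hpV : p ∈ V.image (tau A h) := Finset.mem_image.2 ⟨p, (Rch.mem hp).1, tau_pos hp⟩
  have hqV : h * q0 ∈ V.image (tau A h) := Finset.mem_image.2 ⟨q0, hq0, tau_neg hq0A⟩
  have hnew : ∃ (x0 : G) (e0 : ℤ) (y0 : G), x0 ∈ V.image (tau A h) ∧ y0 ∈ V.image (tau A h) ∧
      T j = x0 * s k0 ^ e0 * y0⁻¹ := by
    rcases hTj with hTj | hTj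
    · refine ⟨h * q0, -b, p, hqV, hpV, ?_⟩
      rw [hTj, hb]; group
    · refine ⟨p, b, h * q0, hpV, hqV, ?_⟩
      rw [hTj, hb]; group
  obtain ⟨x0, e0, y0, hx0, hy0, hT0⟩ := hnew
  have hcl : h ∈ Subgroup.closure (T '' {j}) := by
    rw [Set.image_singleton]
    rcases hTj with hTj | hTj
    · rw [← hTj]; exact Subgroup.subset_closure rfl
    · rw [← inv_inv h, ← hTj]; exact inv_mem (Subgroup.subset_closure rfl)
  obtain ⟨T', hne, hg⟩ := move_good hG h1 h
    (by
      intro q hq _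
      obtain ⟨z, hz⟩ := cs_eq.1 hq
      refine ⟨u, hr, i, f - z, ?_⟩
      have : v = q * s i ^ z := hz
      rw [hh, this]; group) {j} hcl rfl
    (c' := fun k => if k = j then k0 else c k) (e' := fun k => if k = j then e0 else e k)
    (x' := fun k => if k = j then x0 else tau A h (x k))
    (y' := fun k => if k = j then y0 else tau A h (y k))
    (by
      intro k hk
      have hk : k ≠ j := hk
      simp [hk, hA])
    (by
      rintro k rfl
      simp only [if_true]
      exact ⟨hx0, hy0, hT0⟩)
  refine ⟨T', _, _, _, _, _, hne, hg, Finset.card_image_le, ?_, ?_⟩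
  · have hrep : ∀ C ∈ V.image (cs s i), ∃ g ∈ V, cs s i g = C := by
      intro C hC; simpa using hC
    choose! rep hrepV hrepC using hrep
    set φ := fun C => cs s i (tau A h (rep C)) with hφ
    have hφ' : ∀ g ∈ V, φ (cs s i g) = cs s i (tau A h g) := by
      intro g hg
      have hm : cs s i g ∈ V.image (cs s i) := Finset.mem_image_of_mem _ hg
      have h2 := hrepC _ hm
      have h3 := hrepV _ hm
      simp only [hφ]
      by_cases hgA : g ∈ A
      · rw [tau_pos hgA, tau_pos (hside _ _ h3 h2.symm hgA), h2]
      · rw [tau_neg hgA, tau_neg (fun h' => hgA (hside _ _ hg h2 h'))]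
        obtain ⟨z, hz⟩ := cs_eq.1 h2
        exact cs_eq.2 ⟨z, by rw [mul_assoc h, ← hz]⟩
    have himg : (V.image (tau A h)).image (cs s i) = (V.image (cs s i)).image φ := by
      ext C
      simp only [Finset.mem_image, exists_exists_and_eq_and]
      constructor
      · rintro ⟨g, hg, rfl⟩; exact ⟨g, hg, hφ' g hg⟩
      · rintro ⟨g, hg, rfl⟩; exact ⟨g, hg, (hφ' g hg).symm⟩
    rw [himg]
    refine lt_of_le_of_ne Finset.card_image_le fun hcard => huv ?_
    refine Finset.card_image_iff.1 hcard (Finset.mem_coe.2 (Finset.mem_image_of_mem _ hu))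
      (Finset.mem_coe.2 (Finset.mem_image_of_mem _ hv)) ?_
    rw [hφ' u hu, hφ' v hv, tau_pos huA, tau_neg hvA]
    exact cs_eq.2 ⟨f, by rw [hh]; group⟩
  · rintro hcard ⟨Ω, hΩ, σ, ι, hσ, hinj, ha1, ha2⟩
    have htinj : Set.InjOn (tau A h) V :=
      Finset.card_image_iff.1 (le_antisymm Finset.card_image_le hcard)
    have hmem : ∀ g ∈ V, tau A h g ∈ V.image (tau A h) :=
      fun g hg => Finset.mem_image_of_mem _ hg
    refine ⟨Ω, hΩ, σ, fun g => ι (tau A h g), hσ, ?_, ?_, ?_⟩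
    · intro a ha b hb hab
      exact htinj ha hb (hinj (hmem a ha) (hmem b hb) hab)
    · intro w hw z hwz
      have hcs : cs s i w = cs s i (w * s i ^ z) := cs_eq.2 ⟨z, rfl⟩
      have htau : tau A h (w * s i ^ z) = tau A h w * s i ^ z := by
        by_cases hwA : w ∈ A
        · rw [tau_pos hwA, tau_pos (hside _ _ hwz hcs hwA)]
        · rw [tau_neg hwA, tau_neg (fun h' => hwA (hside _ _ hw hcs.symm h')), mul_assoc h]
      have hm := hmem _ hwz
      simp only [htau] at hm ⊢
      exact ha1 _ (hmem w hw) z hm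
    · rintro a z b (⟨k, hkj, hk, rfl, rfl, rfl⟩ | ⟨rfl, rfl, rfl⟩)
      · exact ha2 _ _ _ ⟨k, by simp [hkj, hk], by simp [hkj], by simp [hkj], by simp [hkj]⟩
      · have e1 : tau A h b = a * s i ^ z := by
          rw [tau_neg hvA, hh]; group
        have hm := hmem _ hv
        have hm' := hmem _ hu
        simp only [e1, tau_pos huA] at hm hm' ⊢
        exact ha1 _ hm' z hm

theorem base_case [Countable G] {V : Finset G} {c : Fin n → K} {x : Fin n → G} {e : Fin n → ℤ}
    {y : Fin n → G} {T : Fin n → G} (hG : Good s V c x e y T) (q : ℕ) (i : K) (hq : s i ^ q = 1)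
    (hmin : ∀ T' V' c' x' e' y', NielsenEquiv T T' → Good s V' c' x' e' y' T' →
      V.card ≤ V'.card)
    (hloop : ∀ k, c k = i → cs s i (x k) = cs s i (y k)) :
    PAct s q V i (fun a z b => ∃ k, c k = i ∧ a = x k ∧ z = e k ∧ b = y k) := by
  let H : G ⧸ Subgroup.zpowers (s i) → Subgroup G := fun C =>
    Subgroup.closure (T '' {k | c k = i ∧ cs s i (x k) = C})
  let st : Setoid G :=
    { r := fun a b => cs s i a = cs s i b ∧ a * b⁻¹ ∈ H (cs s i a)
      iseqv :=
        { refl := fun a => ⟨rfl, by simp⟩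
          symm := fun {a b} h => ⟨h.1.symm, by
            have := inv_mem h.2; rw [← h.1]; simpa using this⟩
          trans := fun {a b d} h h' => ⟨h.1.trans h'.1, by
            have h2 := h'.2
            rw [← h.1] at h2
            have := mul_mem h.2 h2
            simpa using this⟩ } }
  have hst : ∀ a b : G, (Quotient.mk st a = Quotient.mk st b) ↔
      (cs s i a = cs s i b ∧ a * b⁻¹ ∈ H (cs s i a)) := fun a b => Quotient.eq (r := st)
  have hcs : ∀ (a : G) (z : ℤ), cs s i (a * s i ^ z) = cs s i a :=
    fun a z => (cs_eq.2 ⟨z, rfl⟩).symm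
  let σ : Equiv.Perm (Quotient st) := Quotient.congr (Equiv.mulRight (s i)⁻¹) (by
    intro a b
    change (_ ∧ _) ↔ (_ ∧ _)
    have h1 := hcs a (-1)
    have h2 := hcs b (-1)
    simp only [zpow_neg, zpow_one] at h1 h2
    simp [h1, h2])
  have hσ1 : ∀ a : G, σ (Quotient.mk st a) = Quotient.mk st (a * (s i)⁻¹) := fun a => rfl
  have hσ2 : ∀ (m : ℕ) (a : G), (σ ^ m) (Quotient.mk st a) = Quotient.mk st (a * (s i ^ m)⁻¹) := by
    intro m
    induction m with
    | zero => intro a; simp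
    | succ m ih => intro a; rw [pow_succ, Equiv.Perm.mul_apply, hσ1, ih, pow_succ]; simp [mul_assoc]
  have hσ : ∀ (z : ℤ) (a : G), (σ ^ z) (Quotient.mk st (a * s i ^ z)) = Quotient.mk st a := by
    intro z a
    cases z with
    | ofNat m => simp [hσ2]
    | negSucc m =>
      rw [zpow_negSucc, Equiv.Perm.inv_eq_iff_eq, hσ2, zpow_negSucc]
  refine ⟨Quotient st, inferInstance, σ, Quotient.mk st, ?_, ?_, ?_, ?_⟩
  · ext a
    induction a using Quotient.inductionOn with
    | _ a => rw [hσ2, hq]; simp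
  · intro v hv w hw hvw
    by_contra hne
    obtain ⟨h1, h2⟩ := (hst v w).1 hvw
    have hsep := sep (P := {v}) (Q := {w}) (by rintro a rfl; exact hne) hG.conn hv rfl
    simp only [Set.mem_singleton_iff, exists_eq_left] at hsep
    rcases hsep with hr | hr
    · obtain ⟨T', V', c', x', e', y', hN, hG', hlt⟩ := fold hG i hloop hv hw hne h2 hr
      exact absurd (hmin _ _ _ _ _ _ hN hG') (not_le.2 hlt)
    · have h3 : w * v⁻¹ ∈ H (cs s i w) := by
        rw [← h1]; have := inv_mem h2; simpa using this
      obtain ⟨T', V', c', x', e', y', hN, hG', hlt⟩ := fold hG i hloop hw hv (Ne.symm hne) h3 hr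
      exact absurd (hmin _ _ _ _ _ _ hN hG') (not_le.2 hlt)
  · intro v _ z _
    exact hσ z v
  · rintro a z b ⟨k, hk, rfl, rfl, rfl⟩
    rw [← hσ (e k) (x k)]
    congr 1
    rw [hst]
    refine ⟨by rw [hcs, hloop k hk], ?_⟩
    have h1 : T k ∈ H (cs s i (x k)) := Subgroup.subset_closure ⟨k, ⟨hk, rfl⟩, rfl⟩
    rw [← hloop k hk]
    have h2 := inv_mem h1
    rw [hG.hT k, hk] at h2
    convert h2 using 1
    group

theorem all_cases [Countable G] (q : ℕ) (i : K) (hq : s i ^ q = 1) (N : ℕ) :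
    ∀ {V : Finset G} {c : Fin n → K} {x : Fin n → G} {e : Fin n → ℤ}
    {y : Fin n → G} {T : Fin n → G} (_ : Good s V c x e y T)
    (_ : ∀ T' V' c' x' e' y', NielsenEquiv T T' → Good s V' c' x' e' y' T' →
      V.card ≤ V'.card)
    (_ : ∀ [DecidableEq (G ⧸ Subgroup.zpowers (s i))], (V.image (cs s i)).card = N),
    PAct s q V i (fun a z b => ∃ k, c k = i ∧ a = x k ∧ z = e k ∧ b = y k) := by
  classical
  induction N using Nat.strong_induction_on with
  | _ N ih =>
  intro V c x e y T hG hmin hN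
  by_cases hloop : ∀ k, c k = i → cs s i (x k) = cs s i (y k)
  · exact base_case hG q i hq hmin hloop
  push Not at hloop
  obtain ⟨j, hj, hne⟩ := hloop
  have hsep := sep (s := s) (V := (V : Set G)) (P := {g | cs s i g = cs s i (x j)})
    (Q := {g | cs s i g = cs s i (y j)}) (w := x j) (by
      intro a ha ha'
      exact hne (ha.symm.trans ha')) hG.conn (hG.hx j) rfl
  have fin : ∀ {u v : G} {f : ℤ}, u ∈ V → v ∈ V → cs s i u ≠ cs s i v →
      (T j = u * s i ^ f * v⁻¹ ∨ T j = (u * s i ^ f * v⁻¹)⁻¹) →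
      (∃ p ∈ {g | cs s i g = cs s i u}, Rch s ((V : Set G) \ {g | cs s i g = cs s i v}) 1 p) →
      PAct s q V i (fun a z b => (∃ k, k ≠ j ∧ c k = i ∧ a = x k ∧ z = e k ∧ b = y k) ∨
          (a = u ∧ z = f ∧ b = v)) := by
    rintro u v f hu hv huv hTj ⟨p, hp, hr⟩
    obtain ⟨z, hz⟩ := cs_eq.1 hp
    have hr' : Rch s ((V : Set G) \ {g | cs s i g = cs s i v}) 1 u :=
      hr.step ⟨i, z, hz⟩ ⟨hu, huv⟩
    obtain ⟨T', V', c', x', e', y', hNE, hG', hle, hlt, himp⟩ := merge hG q i j hu hv huv hTj hr'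
    refine himp (hmin _ _ _ _ _ _ hNE hG') (ih _ (hN ▸ hlt) hG' ?_ ?_)
    · intro T2 V2 c2 x2 e2 y2 h2 hG2
      exact hle.trans (hmin _ _ _ _ _ _ (ne_trans hNE h2) hG2)
    · intro _; congr!
  rcases hsep with hsep | hsep
  · obtain ⟨Ω, hΩ, σ, ι, h1, h2, h3, h4⟩ := fin (f := e j) (hG.hx j) (hG.hy j) hne
      (Or.inl (by rw [hG.hT j, hj])) hsep
    refine ⟨Ω, hΩ, σ, ι, h1, h2, h3, ?_⟩
    rintro a z b ⟨k, hk, rfl, rfl, rfl⟩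
    by_cases hkj : k = j
    · subst hkj; exact h4 _ _ _ (Or.inr ⟨rfl, rfl, rfl⟩)
    · exact h4 _ _ _ (Or.inl ⟨k, hkj, hk, rfl, rfl, rfl⟩)
  · obtain ⟨Ω, hΩ, σ, ι, h1, h2, h3, h4⟩ := fin (f := -e j) (hG.hy j) (hG.hx j) (Ne.symm hne)
      (Or.inr (by rw [hG.hT j, hj]; group)) hsep
    refine ⟨Ω, hΩ, σ, ι, h1, h2, h3, ?_⟩
    rintro a z b ⟨k, hk, rfl, rfl, rfl⟩
    by_cases hkj : k = j
    · subst hkj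
      rw [← h4 _ _ _ (Or.inr ⟨rfl, rfl, rfl⟩)]
      simp
    · exact h4 _ _ _ (Or.inl ⟨k, hkj, hk, rfl, rfl, rfl⟩)


theorem perm_ext {Ω : Type} [Countable Ω] (V : Finset G) (ι : G → Ω) (hι : Set.InjOn ι V) :
    ∃ Φ : Equiv.Perm Ω →* Equiv.Perm (V ⊕ ℕ), ∀ (f : Equiv.Perm Ω) (v w : V),
      f (ι v) = ι w → Φ f (Sum.inl v) = Sum.inl w := by
  classical
  let j : V → Ω := fun v => ι v
  have hj : Function.Injective j := fun a b h => Subtype.ext (hι a.2 b.2 h)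
  obtain ⟨ε⟩ : Nonempty (((Set.range j)ᶜ : Set Ω) ⊕ ℕ ≃ ℕ) := nonempty_equiv_of_countable
  let E : Ω ⊕ ℕ ≃ V ⊕ ℕ :=
    ((((Equiv.ofInjective j hj).sumCongr (Equiv.refl _)).trans
      (Equiv.Set.sumCompl (Set.range j))).symm.sumCongr (Equiv.refl ℕ)).trans
      ((Equiv.sumAssoc _ _ _).trans ((Equiv.refl _).sumCongr ε))
  have hE : ∀ v : V, E.symm (Sum.inl v) = Sum.inl (ι v) := fun v => rfl
  let Φ : Equiv.Perm Ω →* Equiv.Perm (V ⊕ ℕ) :=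
    { toFun := fun f => (E.symm.trans (f.sumCongr (Equiv.refl ℕ))).trans E
      map_one' := by
        ext a
        rcases h : E.symm a with b | b <;> (simp [h]; exact (E.symm_apply_eq.1 h).symm)
      map_mul' := by
        intro f g; ext a
        rcases h : E.symm a with b | b <;> simp [h] }
  refine ⟨Φ, fun f v w h => ?_⟩
  change E ((f.sumCongr (Equiv.refl ℕ)) (E.symm (Sum.inl v))) = _
  rw [hE, Equiv.sumCongr_apply, Sum.map_inl, h, ← hE, Equiv.apply_symm_apply]

theorem conn_exists [Nonempty K] (hgen : Subgroup.closure (Set.range s) = ⊤) (F : Finset G) :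
    ∃ V : Finset G, Conn s (V : Set G) ∧ F ⊆ V := by
  classical
  have one : ∀ g : G, ∃ V : Finset G, Conn s (V : Set G) ∧ g ∈ V := by
    have hstep : ∀ (g : G) (k : K) (z : ℤ), (∃ V : Finset G, Conn s (V : Set G) ∧ g ∈ V) →
        ∃ V : Finset G, Conn s (V : Set G) ∧ g * s k ^ z ∈ V := by
      rintro g k z ⟨V, hV, hg⟩
      refine ⟨insert (g * s k ^ z) V, ⟨?_, ?_⟩, Finset.mem_insert_self _ _⟩
      · simp [hV.1]
      · have hsub : (V : Set G) ⊆ ((insert (g * s k ^ z) V : Finset G) : Set G) := by simp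
        intro v hv
        rcases Finset.mem_insert.1 (Finset.mem_coe.1 hv) with rfl | hv'
        · exact ((hV.2 g hg).mono hsub).step ⟨k, z, rfl⟩ hv
        · exact (hV.2 v hv').mono hsub
    intro g
    have hg : g ∈ Subgroup.closure (Set.range s) := by rw [hgen]; trivial
    induction hg using Subgroup.closure_induction_right with
    | one =>
      refine ⟨{1}, ⟨by simp, ?_⟩, by simp⟩
      intro v hv
      simp only [Finset.coe_singleton, Set.mem_singleton_iff] at hv
      subst hv
      exact .base (by simp)
    | mul_right a _ b hb ih =>
      obtain ⟨k, rfl⟩ := hb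
      simpa using hstep a k 1 ih
    | mul_inv_cancel a _ b hb ih =>
      obtain ⟨k, rfl⟩ := hb
      simpa using hstep a k (-1) ih
  induction F using Finset.induction_on with
  | empty => obtain ⟨V, hV, _⟩ := one 1; exact ⟨V, hV, by simp⟩
  | insert a F _ ih =>
    obtain ⟨V, hV, hF⟩ := ih
    obtain ⟨W, hW, ha⟩ := one a
    refine ⟨V ∪ W, ⟨by simp [hV.1], ?_⟩, ?_⟩
    · intro v hv
      rcases Finset.mem_union.1 (Finset.mem_coe.1 hv) with h | h
      · exact (hV.2 v h).mono (by simp)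
      · exact (hW.2 v h).mono (by simp)
    · intro v hv
      rcases Finset.mem_insert.1 hv with rfl | h
      · exact Finset.mem_union_right _ ha
      · exact Finset.mem_union_left _ (hF h)

theorem grushko [Countable G] [Nonempty K] (q : K → ℕ) (hq : ∀ k, s k ^ q k = 1)
    (hgen : Subgroup.closure (Set.range s) = ⊤)
    (huniv : ∀ (P : Type) [Group P] (σ : K → P), (∀ k, σ k ^ q k = 1) →
      ∃ ρ : G →* P, ∀ k, ρ (s k) = σ k)
    (T : Fin n → G) (hT : Subgroup.closure (Set.range T) = ⊤) :
    ∃ T' : Fin n → G, NielsenEquiv T T' ∧ ∃ (c : Fin n → K) (e : Fin n → ℤ),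
      ∀ j, T' j = s (c j) ^ e j := by
  classical
  let P : ℕ → Prop := fun N => ∃ T' V c x e y, NielsenEquiv T T' ∧ Good s V c x e y T' ∧
    V.card = N
  have hP : ∃ N, P N := by
    obtain ⟨V, hV, hF⟩ := conn_exists hgen (Finset.univ.image T)
    obtain ⟨k⟩ := ‹Nonempty K›
    refine ⟨V.card, T, V, fun _ => k, T, fun _ => 0, fun _ => 1, ne_refl T, ?_, rfl⟩
    exact ⟨hV, fun j => hF (by simp), fun j => hV.1, fun j => by simp⟩
  obtain ⟨T', V, c, x, e, y, hN, hG, hcard⟩ := Nat.find_spec hP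
  have hmin : ∀ T2 V' c' x' e' y', NielsenEquiv T' T2 → Good s V' c' x' e' y' T2 →
      V.card ≤ V'.card := by
    intro T2 V' c' x' e' y' h2 hG2
    rw [hcard]
    exact Nat.find_min' hP ⟨T2, V', c', x', e', y', ne_trans hN h2, hG2, rfl⟩
  have hex : ∀ i, ∃ σ : Equiv.Perm (V ⊕ ℕ), σ ^ q i = 1 ∧
      (∀ v w : V, ∀ z : ℤ, (w : G) = v * s i ^ z → (σ ^ z) (Sum.inl w) = Sum.inl v) ∧
      ∀ k, c k = i → (σ ^ e k) (Sum.inl ⟨y k, hG.hy k⟩) = Sum.inl ⟨x k, hG.hx k⟩ := by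
    intro i
    obtain ⟨Ω, hΩ, σ, ι, h1, h2, h3, h4⟩ := all_cases (q i) i (hq i) (V.image (cs s i)).card hG hmin
      (by intro _; congr!)
    obtain ⟨Φ, hΦ⟩ := perm_ext V ι h2
    refine ⟨Φ σ, by rw [← map_pow, h1, map_one], ?_, ?_⟩
    · intro v w z hw
      rw [← map_zpow]
      apply hΦ
      have := h3 v v.2 z (hw ▸ w.2)
      rwa [← hw] at this
    · intro k hk
      rw [← map_zpow]
      apply hΦ
      exact h4 _ _ _ ⟨k, hk, rfl, rfl, rfl⟩
  choose σ hσ1 hσ2 hσ3 using hex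
  obtain ⟨ρ, hρ⟩ := huniv _ σ hσ1
  let o : V := ⟨1, hG.conn.1⟩
  have hVρ : ∀ v, Rch s (V : Set G) 1 v → ∀ hv : v ∈ V,
      ρ v (Sum.inl ⟨v, hv⟩) = Sum.inl o := by
    intro v hr
    induction hr with
    | base _ => intro hv; simp [o]
    | @step b d hb ha hd ih =>
      intro hv
      obtain ⟨k, z, hz⟩ := ha
      have h1 := hσ2 k ⟨b, hb.mem⟩ ⟨d, hv⟩ z hz
      have h2 : ρ d = ρ b * σ k ^ z := by rw [hz, map_mul, map_zpow, hρ]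
      rw [h2, Equiv.Perm.mul_apply, h1]
      exact ih hb.mem
  have hVρ' : ∀ v : V, ρ v (Sum.inl v) = Sum.inl o := fun v => hVρ v (hG.conn.2 v v.2) v.2
  have hTρ : ∀ j, ρ (T' j) (Sum.inl o) = Sum.inl o := by
    intro j
    rw [hG.hT j, map_mul, map_mul, map_inv, map_zpow, hρ, Equiv.Perm.mul_apply,
      Equiv.Perm.mul_apply]
    have h1 : (ρ (y j))⁻¹ (Sum.inl o) = Sum.inl ⟨y j, hG.hy j⟩ := by
      rw [Equiv.Perm.inv_eq_iff_eq]; exact (hVρ' ⟨y j, hG.hy j⟩).symm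
    rw [h1, hσ3 (c j) j rfl]
    exact hVρ' ⟨x j, hG.hx j⟩
  have hT' : Subgroup.closure (Set.range T') = ⊤ :=
    top_le_iff.1 (hT ▸ ne_closure (ne_symm hN))
  have hall : ∀ g, ρ g (Sum.inl o) = Sum.inl o := by
    intro g
    have hle : Subgroup.closure (Set.range T') ≤
        (MulAction.stabilizer (Equiv.Perm (V ⊕ ℕ)) (Sum.inl o : V ⊕ ℕ)).comap ρ := by
      rw [Subgroup.closure_le]
      rintro _ ⟨j, rfl⟩
      exact hTρ j
    have : g ∈ Subgroup.closure (Set.range T') := by rw [hT']; trivial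
    exact hle this
  have hV1 : ∀ v ∈ V, v = 1 := by
    intro v hv
    have h1 := hVρ' ⟨v, hv⟩
    have h2 := hall v
    have h3 := (ρ v).injective (h1.trans h2.symm)
    exact congrArg Subtype.val (Sum.inl_injective h3)
  refine ⟨T', hN, c, e, fun j => ?_⟩
  rw [hG.hT j, hV1 _ (hG.hx j), hV1 _ (hG.hy j)]
  simp

/-- Euclid: after further Nielsen moves, there is at most one non-zero exponent per colour. -/
theorem euclid (T : Fin n → G) (c : Fin n → K) (e : Fin n → ℤ) (hT : ∀ j, T j = s (c j) ^ e j) :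
    ∃ T' : Fin n → G, NielsenEquiv T T' ∧ ∃ e' : Fin n → ℤ, (∀ j, T' j = s (c j) ^ e' j) ∧
      (∀ j, 0 ≤ e' j) ∧ ∀ i j, i ≠ j → c i = c j → e' i = 0 ∨ e' j = 0 := by
  classical
  induction hN : ∑ j, (e j).natAbs using Nat.strong_induction_on generalizing T e with
  | _ N ih =>
  by_cases hdone : ∀ i j, i ≠ j → c i = c j → e i = 0 ∨ e j = 0
  · refine ⟨fun j => s (c j) ^ |e j|, ?_, fun j => |e j|, fun _ => rfl, fun j => abs_nonneg _, ?_⟩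
    · have key : ∀ F : Finset (Fin n),
          NielsenEquiv T (fun j => if j ∈ F then s (c j) ^ |e j| else T j) := by
        intro F
        induction F using Finset.induction_on with
        | empty => simpa using ne_refl T
        | insert a F ha ih =>
          refine ne_trans ih ?_
          rcases abs_choice (e a) with h | h
          · convert ne_refl _ using 1
            funext k
            by_cases hk : k = a
            · subst hk; simp [ha, h, hT]
            · simp [hk]
          · convert ne_inv _ a using 1
            funext k
            by_cases hk : k = a
            · subst hk; simp [ha, h, hT]
            · simp [hk]
      simpa using key Finset.univ
    · intro i j hij hc
      simpa using hdone i j hij hc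
  · push Not at hdone
    obtain ⟨i, j, hij, hc, hi, hj⟩ := hdone
    have main : ∀ i j, i ≠ j → c i = c j → e j ≠ 0 → (e j).natAbs ≤ (e i).natAbs →
        ∃ (T1 : Fin n → G) (e1 : Fin n → ℤ), NielsenEquiv T T1 ∧ (∀ j, T1 j = s (c j) ^ e1 j) ∧
          ∑ j, (e1 j).natAbs < N := by
      intro i j hij hc hj hle
      have fin : ∀ a : ℤ, a.natAbs < (e i).natAbs →
          ∑ k, ((update e i a) k).natAbs < N := by
        intro a ha
        rw [← hN]
        refine Finset.sum_lt_sum (fun k _ => ?_) ⟨i, Finset.mem_univ _, by simpa using ha⟩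
        by_cases hk : k = i
        · subst hk; simpa using ha.le
        · simp [hk]
      have hlt : (e i + e j).natAbs < (e i).natAbs ∨ (e i - e j).natAbs < (e i).natAbs := by
        omega
      rcases hlt with h | h
      · refine ⟨_, update e i (e i + e j), ne_mul T hij, ?_, fin _ h⟩
        intro k
        by_cases hk : k = i
        · subst hk; simp [hT, hc, zpow_add]
        · simp [hk, hT]
      · refine ⟨_, update e i (e i - e j), ne_mulinv T hij, ?_, fin _ h⟩
        intro k
        by_cases hk : k = i
        · subst hk; simp [hT, hc, zpow_sub]
        · simp [hk, hT]
    have : ∃ (T1 : Fin n → G) (e1 : Fin n → ℤ), NielsenEquiv T T1 ∧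
        (∀ j, T1 j = s (c j) ^ e1 j) ∧ ∑ j, (e1 j).natAbs < N := by
      rcases le_total (e j).natAbs (e i).natAbs with h | h
      · exact main i j hij hc hj h
      · exact main j i hij.symm hc.symm hi h
    obtain ⟨T1, e1, h1, h2, h3⟩ := this
    obtain ⟨T', h4, h5⟩ := ih _ h3 T1 e1 h2 rfl
    exact ⟨T', ne_trans h1 h4, h5⟩

theorem final [Countable G] [Nonempty K] (q : K → ℕ) (hq : ∀ k, s k ^ q k = 1)
    (hq1 : ∀ k, q k ≠ 1)
    (hgen : Subgroup.closure (Set.range s) = ⊤)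
    (huniv : ∀ (P : Type) [Group P] (σ : K → P), (∀ k, σ k ^ q k = 1) →
      ∃ ρ : G →* P, ∀ k, ρ (s k) = σ k)
    (T : Fin n → G) (hT : Subgroup.closure (Set.range T) = ⊤) :
    ∃ T' : Fin n → G, NielsenEquiv T T' ∧ ∃ (pos : K → Fin n) (ν : K → ℕ),
      Function.Injective pos ∧ (∀ k, 0 < ν k ∧ Nat.gcd (ν k) (q k) = 1) ∧
      (∀ k, T' (pos k) = s k ^ ν k) ∧ ∀ j, (∀ k, pos k ≠ j) → T' j = 1 := by
  classical
  obtain ⟨T1, hN1, c, e1, h1⟩ := grushko q hq hgen huniv T hT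
  obtain ⟨T', hN2, e, h2, hpos, huniq⟩ := euclid T1 c e1 h1
  have hN := ne_trans hN1 hN2
  have hT' : Subgroup.closure (Set.range T') = ⊤ :=
    top_le_iff.1 (hT ▸ ne_closure (ne_symm hN))
  have hex : ∀ k, ∃ j, c j = k ∧ Int.gcd (e j) (q k) = 1 := by
    intro k
    obtain ⟨ρ, hρ⟩ := huniv (Multiplicative (ZMod (q k)))
      (fun l => if l = k then Multiplicative.ofAdd 1 else 1) (by
        intro l
        by_cases hl : l = k
        · subst hl; simp [← ofAdd_nsmul]
        · simp [hl])
    have hρT : ∀ j, ρ (T' j) = if c j = k then Multiplicative.ofAdd ((e j : ℤ) : ZMod (q k))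
        else 1 := by
      intro j
      rw [h2, map_zpow, hρ]
      split_ifs
      · rw [← ofAdd_zsmul]; simp
      · simp
    -- the image is generated by a single element
    have hd : ∃ d : ℤ, (∃ j, c j = k ∧ e j = d) ∨ d = 0 := ⟨0, Or.inr rfl⟩
    obtain ⟨d, hd, hall⟩ : ∃ d : ℤ, ((∃ j, c j = k ∧ e j = d) ∨ d = 0) ∧
        ∀ j, c j = k → e j = 0 ∨ e j = d := by
      by_cases hz : ∃ j, c j = k ∧ e j ≠ 0
      · obtain ⟨j, hj, hne⟩ := hz
        refine ⟨e j, Or.inl ⟨j, hj, rfl⟩, fun i hi => ?_⟩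
        by_cases hij : i = j
        · subst hij; exact Or.inr rfl
        · exact Or.inl ((huniq i j hij (hi.trans hj.symm)).resolve_right hne)
      · push Not at hz
        exact ⟨0, Or.inr rfl, fun j hj => Or.inl (hz j hj)⟩
    have hle : Subgroup.closure (Set.range T') ≤
        (Subgroup.zpowers (Multiplicative.ofAdd ((d : ℤ) : ZMod (q k)))).comap ρ := by
      rw [Subgroup.closure_le]
      rintro _ ⟨j, rfl⟩
      rw [SetLike.mem_coe, Subgroup.mem_comap, hρT]
      split_ifs with hc
      · rcases hall j hc with h | h
        · rw [h]; simp
        · rw [h]; exact Subgroup.mem_zpowers _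
      · exact one_mem _
    have hmem : s k ∈ Subgroup.closure (Set.range T') := by rw [hT']; trivial
    have := hle hmem
    rw [Subgroup.mem_comap, hρ, if_pos rfl, Subgroup.mem_zpowers_iff] at this
    obtain ⟨z, hz⟩ := this
    rw [← ofAdd_zsmul] at hz
    have hz' : ((z * d - 1 : ℤ) : ZMod (q k)) = 0 := by
      have := Multiplicative.ofAdd.injective hz
      push_cast
      rw [sub_eq_zero, ← this]
      simp
    rw [ZMod.intCast_zmod_eq_zero_iff_dvd] at hz'
    have hcop : Int.gcd d (q k) = 1 := by
      obtain ⟨t, ht⟩ := hz'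
      rw [← Int.isCoprime_iff_gcd_eq_one]
      exact ⟨z, -t, by linarith⟩
    rcases hd with ⟨j, hj, rfl⟩ | rfl
    · exact ⟨j, hj, hcop⟩
    · exact absurd (by simpa using hcop) (hq1 k)
  choose pos hc hg using hex
  have hne : ∀ k, e (pos k) ≠ 0 := by
    intro k h
    have := hg k
    rw [h] at this
    exact hq1 k (by simpa using this)
  refine ⟨T', hN, pos, fun k => (e (pos k)).natAbs, ?_, ?_, ?_, ?_⟩
  · intro a b hab
    rw [← hc a, ← hc b, hab]
  · intro k
    exact ⟨Int.natAbs_pos.2 (hne k), by simpa [Int.gcd] using hg k⟩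
  · intro k
    rw [h2, hc, ← zpow_natCast, Int.natAbs_of_nonneg (hpos _)]
  · intro j hj
    rw [h2]
    have : e j = 0 := by
      by_contra h0
      exact (huniq j (pos (c j)) (hj _).symm (hc _).symm).elim h0 (hne _)
    rw [this, zpow_zero]

end Grushko
end Grushko

namespace Grushko

theorem countable_of_gen {G K : Type} [Group G] [Countable K] (s : K → G)
    (hgen : Subgroup.closure (Set.range s) = ⊤) : Countable G := by
  classical
  have h1 : Function.Surjective (fun L : List (K × Bool) => FreeGroup.lift s (FreeGroup.mk L)) := by
    intro g
    have hg : g ∈ (FreeGroup.lift s).range := by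
      rw [FreeGroup.range_lift_eq_closure, hgen]; trivial
    obtain ⟨w, rfl⟩ := hg
    exact ⟨w.toWord, by simp only [FreeGroup.mk_toWord]⟩
  exact h1.countable

/-- The standard generators. -/
def gens (m r : ℕ) (p : Fin r → ℕ) : Fin m ⊕ Fin r → Monoid.CoprodI (FPFactor m r p)
  | .inl i => Monoid.CoprodI.of (show FPFactor m r p none from FreeGroup.of i)
  | .inr i => Monoid.CoprodI.of
      (show FPFactor m r p (some i) from Multiplicative.ofAdd (1 : ZMod (p i)))

/-- The orders of the standard generators. -/
def ords (m r : ℕ) (p : Fin r → ℕ) : Fin m ⊕ Fin r → ℕ := Sum.elim (fun _ => 0) p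

/-- Inclusion of the free factor. -/
def ofFree (m r : ℕ) (p : Fin r → ℕ) : FreeGroup (Fin m) →* Monoid.CoprodI (FPFactor m r p) :=
  (Monoid.CoprodI.of : FPFactor m r p none →* _)

/-- Inclusion of a cyclic factor. -/
def ofCyc (m r : ℕ) (p : Fin r → ℕ) (i : Fin r) :
    Multiplicative (ZMod (p i)) →* Monoid.CoprodI (FPFactor m r p) :=
  (Monoid.CoprodI.of : FPFactor m r p (some i) →* _)

theorem gens_ords (m r : ℕ) (p : Fin r → ℕ) (k : Fin m ⊕ Fin r) :
    gens m r p k ^ ords m r p k = 1 := by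
  rcases k with i | i
  · simp [ords]
  · change (ofCyc m r p i (Multiplicative.ofAdd 1)) ^ (p i) = 1
    rw [← map_pow, ← ofAdd_nsmul]
    simp

theorem gens_gen (m r : ℕ) (p : Fin r → ℕ) :
    Subgroup.closure (Set.range (gens m r p)) = ⊤ := by
  rw [eq_top_iff]
  intro g _
  induction g using Monoid.CoprodI.induction_on with
  | one => exact one_mem _
  | mul a b ha hb => exact mul_mem (ha trivial) (hb trivial)
  | of i a =>
    cases i with
    | none =>
      change ofFree m r p a ∈ _
      have h : (⊤ : Subgroup (FreeGroup (Fin m))) ≤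
          (Subgroup.closure (Set.range (gens m r p))).comap (ofFree m r p) := by
        rw [← FreeGroup.closure_range_of, Subgroup.closure_le]
        rintro _ ⟨k, rfl⟩
        exact Subgroup.subset_closure ⟨Sum.inl k, rfl⟩
      exact h (Subgroup.mem_top (G := FreeGroup (Fin m)) a)
    | some i =>
      change ofCyc m r p i a ∈ _
      obtain ⟨z, hz⟩ := ZMod.intCast_surjective (Multiplicative.toAdd (α := ZMod (p i)) a)
      have : a = (Multiplicative.ofAdd (1 : ZMod (p i))) ^ z := by
        rw [← ofAdd_zsmul, zsmul_one, hz]; rfl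
      rw [this, map_zpow]
      have hmem : ofCyc m r p i (Multiplicative.ofAdd (1 : ZMod (p i))) ∈
          Subgroup.closure (Set.range (gens m r p)) :=
        Subgroup.subset_closure ⟨Sum.inr i, rfl⟩
      exact zpow_mem hmem z

theorem gens_univ (m r : ℕ) (p : Fin r → ℕ) (P : Type) [Group P] (σ : Fin m ⊕ Fin r → P)
    (hσ : ∀ k, σ k ^ ords m r p k = 1) :
    ∃ ρ : Monoid.CoprodI (FPFactor m r p) →* P, ∀ k, ρ (gens m r p k) = σ k := by
  have hc : ∀ i : Fin r, ∃ φ : Multiplicative (ZMod (p i)) →* P,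
      φ (Multiplicative.ofAdd 1) = σ (Sum.inr i) := by
    intro i
    let f : ℤ →+ Additive P := zmultiplesHom (Additive P) (Additive.ofMul (σ (Sum.inr i)))
    have hf : f (p i) = 0 := by
      have := hσ (Sum.inr i)
      simp only [ords, Sum.elim_inr] at this
      simp [f, ← ofMul_pow, this]
    let F0 : {f : ℤ →+ Additive P // f ((p i : ℕ) : ℤ) = 0} := ⟨f, hf⟩
    let L : ZMod (p i) →+ Additive P := ZMod.lift (p i) F0
    refine ⟨⟨⟨fun a => (L a.toAdd).toMul, by simp⟩, fun a b => by simp⟩, ?_⟩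
    have h1 : L ((1 : ℤ) : ZMod (p i)) = f 1 := ZMod.lift_coe _ _ _
    rw [Int.cast_one] at h1
    change Additive.toMul (L 1) = _
    rw [h1]
    simp [f]
  choose φ hφ using hc
  let F : ∀ o, FPFactor m r p o →* P := fun o => match o with
    | none => (FreeGroup.lift (fun i => σ (Sum.inl i)) : FreeGroup (Fin m) →* P)
    | some i => φ i
  refine ⟨Monoid.CoprodI.lift F, ?_⟩
  rintro (i | i)
  · refine (Monoid.CoprodI.lift_of F _).trans ?_
    exact FreeGroup.lift_apply_of
  · exact (Monoid.CoprodI.lift_of F _).trans (hφ i)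

end Grushko

/-- Every generating `n`-tuple of the free product `G = F ∗ ℤ/p₁ℤ ∗ ⋯ ∗ ℤ/p_rℤ` of a free
group `F` with free basis `x₁,…,x_m` and finite cyclic groups of orders `p₁,…,p_r ≥ 2`
with generators `s₁,…,s_r` satisfies `n ≥ m + r`, and is Nielsen equivalent to a tuple
`(x₁,…,x_m, s₁^{ν₁},…,s_r^{ν_r}, 1,…,1)` with each `ν_i` positive and coprime to `p_i`. -/
theorem nielsen_free_product_free_and_cyclics
    (m r : ℕ) (p : Fin r → ℕ) (hp : ∀ i, 2 ≤ p i) {n : ℕ}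
    (T : Fin n → Monoid.CoprodI (FPFactor m r p))
    (hT : Subgroup.closure (Set.range T) = ⊤) :
    m + r ≤ n ∧
    ∃ ν : Fin r → ℕ, (∀ i, 0 < ν i ∧ Nat.gcd (ν i) (p i) = 1) ∧
      NielsenEquiv T (fun i : Fin n =>
        if h : (i : ℕ) < m then
          Monoid.CoprodI.of
            (show FPFactor m r p none from FreeGroup.of (⟨(i : ℕ), h⟩ : Fin m))
        else if h' : (i : ℕ) < m + r then
          (Monoid.CoprodI.of (show FPFactor m r p (some ⟨(i : ℕ) - m, by omega⟩) from
              Multiplicative.ofAdd (1 : ZMod (p ⟨(i : ℕ) - m, by omega⟩)))) ^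
            ν ⟨(i : ℕ) - m, by omega⟩
        else 1) := by
  classical
  by_cases hK : Nonempty (Fin m ⊕ Fin r)
  · haveI : Countable (Monoid.CoprodI (FPFactor m r p)) :=
      Grushko.countable_of_gen _ (Grushko.gens_gen m r p)
    obtain ⟨T', hN, pos, ν, hinj, hν, hpos, hone⟩ := Grushko.final (s := Grushko.gens m r p)
      (Grushko.ords m r p) (Grushko.gens_ords m r p)
      (by
        rintro (i | i)
        · simp [Grushko.ords]
        · have := hp i
          simp only [Grushko.ords, Sum.elim_inr]
          omega)
      (Grushko.gens_gen m r p) (Grushko.gens_univ m r p) T hT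
    have hle : m + r ≤ n := by
      have := Fintype.card_le_of_injective pos hinj
      simpa using this
    refine ⟨hle, fun i => ν (Sum.inr i), fun i => hν (Sum.inr i), ?_⟩
    let ι : Fin m ⊕ Fin r → Fin n := fun k => Fin.castLE hle (finSumFinEquiv k)
    have hι : Function.Injective ι :=
      (Fin.castLE_injective hle).comp finSumFinEquiv.injective
    let E : {x // x ∈ Set.range ι} ≃ {x // x ∈ Set.range pos} :=
      (Equiv.ofInjective ι hι).symm.trans (Equiv.ofInjective pos hinj)
    let π : Equiv.Perm (Fin n) := E.extendSubtype
    have hπ : ∀ k, π (ι k) = pos k := by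
      intro k
      have h1 := E.extendSubtype_apply_of_mem (ι k) ⟨k, rfl⟩
      refine h1.trans ?_
      have h2 : (Equiv.ofInjective ι hι).symm ⟨ι k, ⟨k, rfl⟩⟩ = k :=
        Equiv.ofInjective_symm_apply hι k
      simp only [E, Equiv.trans_apply, h2, Equiv.ofInjective_apply]
    refine Grushko.ne_trans hN ?_
    convert Grushko.ne_perm T' π using 1
    funext i
    simp only [Function.comp_apply]
    split_ifs with h h'
    · have hi : i = ι (Sum.inl ⟨i, h⟩) := by
        apply Fin.ext; simp [ι]
      have h2 : T' (π i) = Grushko.gens m r p (Sum.inl ⟨i, h⟩) ^ ν (Sum.inl ⟨i, h⟩) := by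
        rw [← hpos, ← hπ, ← hi]
      have h3 : ν (Sum.inl ⟨i, h⟩) = 1 := by
        simpa [Grushko.ords] using (hν (Sum.inl ⟨i, h⟩)).2
      rw [h2, h3, pow_one]
      rfl
    · have hi : i = ι (Sum.inr ⟨i - m, by omega⟩) := by
        apply Fin.ext; simp [ι]; omega
      have h2 : T' (π i) = Grushko.gens m r p (Sum.inr ⟨i - m, by omega⟩) ^
          ν (Sum.inr ⟨i - m, by omega⟩) := by
        rw [← hpos, ← hπ, ← hi]
      rw [h2]
      rfl
    · refine (hone _ fun k hk => h' ?_).symm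
      rw [← hπ] at hk
      have : ι k = i := π.injective hk
      rw [← this]
      exact (finSumFinEquiv k).2
  · rw [not_nonempty_iff] at hK
    have hm : m = 0 := by
      by_contra h
      exact hK.elim (Sum.inl ⟨0, by omega⟩)
    have hr : r = 0 := by
      by_contra h
      exact hK.elim (Sum.inr ⟨0, by omega⟩)
    refine ⟨by omega, fun _ => 1, fun i => by simp, ?_⟩
    have hone : ∀ g : Monoid.CoprodI (FPFactor m r p), g = 1 := by
      intro g
      have h1 : g ∈ Subgroup.closure (Set.range (Grushko.gens m r p)) := by
        rw [Grushko.gens_gen]; trivial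
      rw [Set.range_eq_empty, Subgroup.closure_empty] at h1
      exact Subgroup.mem_bot.1 h1
    convert Grushko.ne_refl T using 1
    funext i
    rw [hone (T i)]
    exact hone _
end
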